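/- arXiv:math/0503343 — 2 statements merged into one kernel-verified Lean document; each statement's English description precedes it below -/
import Mathlib

section
/- Under the hypotheses of the scaling-function theorem (C repelling; r and #r⁻¹ continuous at the points of C; m_0 β-Lipschitz at the points of C satisfying the quadrature and low-pass conditions), set W(x) = |m_0(x)|² / #r⁻¹(r(x)). Then C is a W-cycle, for every x ∈ X one has Σ_{ω∈N_C(x)} |φ̂(x, ω)|² = h_C(x) where h_C(x) = P_x(N_C(x)) is the harmonic function of the W-cycle C, and consequently ⟨π(f)φ̂, φ̂⟩_{L²(X_∞, λ_C)} = ∫_X f h_C dρ for every f ∈ L^∞(X, ρ). -/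
open MeasureTheory Filter Topology ENNReal

noncomputable section

abbrev Solenoid {X : Type*} (r : X → X) : Type _ :=
  {z : ℤ → X // ∀ n : ℤ, r (z (n + 1)) = z n}

/-- The shift automorphism `r̂` on the solenoid, `(r̂ z) n = z (n-1)`. -/
def shiftHat {X : Type*} (r : X → X) (z : Solenoid r) : Solenoid r :=
  ⟨fun n => z.1 (n - 1), fun n => by
    have h := z.2 (n - 1)
    have h1 : n - 1 + 1 = n := by ring
    rw [h1] at h
    show r (z.1 (n + 1 - 1)) = z.1 (n - 1)
    have h2 : n + 1 - 1 = n := by ring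
    rw [h2]
    exact h⟩

/-- The inverse of the shift automorphism `r̂`. -/
def shiftHatInv {X : Type*} (r : X → X) (z : Solenoid r) : Solenoid r :=
  ⟨fun n => z.1 (n + 1), fun n => z.2 (n + 1)⟩

/-- Integer powers `r̂^n` of the shift automorphism. -/
def shiftHatZ {X : Type*} (r : X → X) : ℤ → Solenoid r → Solenoid r
  | Int.ofNat n => (shiftHat r)^[n]
  | Int.negSucc n => (shiftHatInv r)^[n + 1]

/-- The function `𝔠(z) = #r⁻¹(r(z₀))` on the solenoid. -/
def cFun {X : Type*} (r : X → X) (z : Solenoid r) : ℝ :=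
  Nat.card (r ⁻¹' {r (z.1 0)})

/-- The cocycle `𝔠⁽ⁿ⁾`: `𝔠⁽⁰⁾ = 1`, `𝔠⁽ⁿ⁾ = 𝔠 ⋯ (𝔠∘r̂^{n-1})` for `n ≥ 1`, and
`𝔠⁽⁻ⁿ⁾ = 1/((𝔠∘r̂⁻¹) ⋯ (𝔠∘r̂⁻ⁿ))` for `n ≥ 1`. -/
def cPow {X : Type*} (r : X → X) : ℤ → Solenoid r → ℝ
  | Int.ofNat n => fun z => ∏ k ∈ Finset.range n, cFun r (shiftHatZ r (k : ℤ) z)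
  | Int.negSucc n => fun z =>
      (∏ k ∈ Finset.range (n + 1), cFun r (shiftHatZ r (-(k + 1) : ℤ) z))⁻¹

/-- The set `N_C(x)` of paths starting at `x` converging to the cycle `C = {xc i}`. -/
def NC {X : Type*} [TopologicalSpace X] (r : X → X) {p : ℕ} (xc : ZMod p → X) (x : X) :
    Set (Solenoid r) :=
  {z | z.1 0 = x ∧ ∃ i : ZMod p, Tendsto (fun n : ℕ => z.1 ((p : ℤ) * (n : ℤ))) atTop (𝓝 (xc i))}

/-- The scaling function `φ̂(x, (z_k)) = ∏_{k=1}^∞ α_{i(ω)+k}⁻¹ m₀(z_k) / √(#r⁻¹(r z_k))`. -/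
def scalingFn {X : Type*} (r : X → X) {p : ℕ} (α : ZMod p → ℂ) (ι : Solenoid r → ZMod p)
    (m0 : X → ℂ) (z : Solenoid r) : ℂ :=
  ∏' k : ℕ, (α (ι z + ((k + 1 : ℕ) : ZMod p)))⁻¹ * m0 (z.1 ((k : ℤ) + 1)) /
    (Real.sqrt (Nat.card (r ⁻¹' {r (z.1 ((k : ℤ) + 1))})) : ℂ)

/-- Admissibility of a finite word `(a 1, …, a n)` as an initial segment of a path in `Ω_x`. -/
def cylOK {X : Type*} (r : X → X) (x : X) (n : ℕ) (a : Fin n → X) : Prop :=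
  (∀ h : 0 < n, r (a ⟨0, h⟩) = x) ∧
  ∀ (j : ℕ) (hj : j + 1 < n), r (a ⟨j + 1, hj⟩) = a ⟨j, by omega⟩

/-- The cylinder set `{(z₁, z₂, …) ∈ Ω_x : z₁ = a 1, …, z_n = a n}`. -/
def cylSet {X : Type*} (r : X → X) (x : X) (n : ℕ) (a : Fin n → X) : Set (Solenoid r) :=
  {ω | ω.1 0 = x ∧ ∀ j : Fin n, ω.1 ((j : ℕ) + 1) = a j}

/-- A family `(P x)` of Borel probability measures supported on `Ω_x`, assigning to each
admissible cylinder the product of the `W`-values of its letters. -/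
def IsPathMeasureFamily {X : Type*} [MeasurableSpace X] (r : X → X) (W : X → ℝ≥0∞)
    (P : X → MeasureTheory.Measure (Solenoid r)) : Prop :=
  (∀ x, MeasureTheory.IsProbabilityMeasure (P x)) ∧
  (∀ x, P x {ω : Solenoid r | ω.1 0 = x} = 1) ∧
  (∀ (x : X) (n : ℕ) (a : Fin n → X), cylOK r x n a →
    P x (cylSet r x n a) = ∏ j : Fin n, W (a j))


theorem exists_seq_of_step (Q : ℕ → (ℕ → ℕ) → Prop)
    (hext : ∀ m y y', (∀ k < m, y k = y' k) → Q m y → Q m y')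
    (hstep : ∀ m y, Q m y → ∃ a, Q (m + 1) (Function.update y m a))
    (h0 : Q 0 (fun _ => 0)) : ∃ y, ∀ m, Q m y := by
  classical
  choose! a ha using hstep
  let Y : ℕ → (ℕ → ℕ) := fun m => Nat.rec (fun _ => 0) (fun m y => Function.update y m (a m y)) m
  have hYs : ∀ m, Y (m + 1) = Function.update (Y m) m (a m (Y m)) := fun m => rfl
  have hY : ∀ m, Q m (Y m) := by
    intro m
    induction m with
    | zero => exact h0
    | succ m ih => rw [hYs]; exact ha m _ ih
  have hst : ∀ k m, k < m → Y m k = Y (k + 1) k := by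
    intro k m hkm
    induction m, hkm using Nat.le_induction with
    | base => rfl
    | succ m hm ih =>
      rw [hYs, Function.update_of_ne (by omega)]
      exact ih
  refine ⟨fun k => Y (k + 1) k, fun m => hext m (Y m) _ (fun k hk => hst k m hk) (hY m)⟩

def CSep {α : Type*} [MeasurableSpace α] (s : ℕ → Set α) : Prop :=
  ∃ B : ℕ → Set α, (∀ n, s n ⊆ B n) ∧ (∀ n, MeasurableSet (B n)) ∧ ∀ x, ∃ n, x ∉ B n

theorem CSep.of_union {α : Type*} [MeasurableSpace α] (s : ℕ → Set α) (i : ℕ)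
    (t : ℕ → ℕ → Set α) (ht : ∀ k n, n ≠ i → s n ⊆ t k n) (hi : s i ⊆ ⋃ k, t k i)
    (h : ∀ k, CSep (t k)) : CSep s := by
  classical
  choose B hB hBm hBe using h
  refine ⟨fun n => if n = i then ⋃ k, B k i else ⋂ k, B k n, ?_, ?_, ?_⟩
  · intro n
    by_cases hn : n = i
    · subst hn
      simp only [if_true]
      exact hi.trans (Set.iUnion_mono fun k => hB k n)
    · simp only [hn, if_false]
      exact Set.subset_iInter fun k => (ht k n hn).trans (hB k n)
  · intro n
    by_cases hn : n = i
    · simp only [hn, if_true]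
      exact MeasurableSet.iUnion fun k => hBm k i
    · simp only [hn, if_false]
      exact MeasurableSet.iInter fun k => hBm k n
  · intro x
    by_contra hcon
    push Not at hcon
    have h1 := hcon i
    simp only [if_true, Set.mem_iUnion] at h1
    obtain ⟨k, hk⟩ := h1
    obtain ⟨n, hn⟩ := hBe k x
    by_cases hni : n = i
    · subst hni; exact hn hk
    · have := hcon n
      simp only [hni, if_false, Set.mem_iInter] at this
      exact hn (this k)

theorem novikov_range {α : Type*} [TopologicalSpace α] [T2Space α] [MeasurableSpace α]
    [OpensMeasurableSpace α] (f : ℕ → (ℕ → ℕ) → α) (hf : ∀ n, Continuous (f n))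
    (h : ∀ x, ∃ n, x ∉ Set.range (f n)) : CSep (fun n => Set.range (f n)) := by
  classical
  by_contra hns
  let Z : (ℕ → ℕ) → ℕ → ℕ → Set (ℕ → ℕ) := fun y m n =>
    {w | ∀ k < m, (Nat.unpair k).1 = n → w (Nat.unpair k).2 = y k}
  obtain ⟨y, hy⟩ := exists_seq_of_step (fun m y => ¬ CSep (fun n => f n '' Z y m n))
    (by
      intro m y y' hyy hQ
      have : Z y m = Z y' m := by
        ext n w
        simp only [Z, Set.mem_ofPred_eq]
        refine forall₂_congr fun k hk => ?_
        rw [hyy k hk]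
      simpa [this] using hQ)
    (by
      intro m y hQ
      by_contra hcon
      push Not at hcon
      refine hQ (CSep.of_union _ (Nat.unpair m).1 _ ?_ ?_ hcon)
      · intro a n hn
        refine Set.image_mono ?_
        intro w hw k hk hkn
        have hkm : k ≠ m := by rintro rfl; exact hn hkn.symm
        rw [Function.update_of_ne hkm]
        exact hw k (by omega) hkn
      · rintro _ ⟨w, hw, rfl⟩
        refine Set.mem_iUnion.2 ⟨w (Nat.unpair m).2, w, ?_, rfl⟩
        intro k hk hkn
        by_cases hkm : k = m
        · subst hkm; simp
        · rw [Function.update_of_ne hkm]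
          exact hw k (by omega) hkn)
    (by
      convert hns using 4 with n
      simp [Z])
  let Y : ℕ → ℕ → ℕ := fun n j => y (Nat.pair n j)
  have hne : ∃ i, f i (Y i) ≠ f 0 (Y 0) := by
    by_contra hcon
    push Not at hcon
    obtain ⟨n, hn⟩ := h (f 0 (Y 0))
    exact hn ⟨Y n, hcon n⟩
  obtain ⟨i, hi⟩ := hne
  have hi0 : i ≠ 0 := by rintro rfl; exact hi rfl
  obtain ⟨U, V, hU, hV, hiU, h0V, hUV⟩ := t2_separation hi
  have key : ∀ (n : ℕ) (U : Set α), IsOpen U → f n (Y n) ∈ U →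
      ∃ m, ∀ m' ≥ m, f n '' Z y m' n ⊆ U := by
    intro n U hU hn
    have hop : IsOpen (f n ⁻¹' U) := hU.preimage (hf n)
    rw [isOpen_pi_iff] at hop
    obtain ⟨I, u, hu, hsub⟩ := hop (Y n) hn
    refine ⟨I.sup (fun j => Nat.pair n j + 1), fun m' hm' => ?_⟩
    rintro _ ⟨w, hw, rfl⟩
    apply hsub
    intro j hj
    have h1 : Nat.pair n j < m' := by
      have := Finset.le_sup (f := fun j => Nat.pair n j + 1) hj

      omega
    have := hw _ h1 (by simp)
    simp only [Nat.unpair_pair] at this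
    rw [this]
    exact (hu j hj).2
  obtain ⟨m1, hm1⟩ := key i U hU hiU
  obtain ⟨m2, hm2⟩ := key 0 V hV h0V
  refine hy (max m1 m2) ⟨fun n => if n = i then U else if n = 0 then V else Set.univ, ?_, ?_, ?_⟩
  · intro n
    by_cases hni : n = i
    · subst hni; simpa using hm1 _ (le_max_left _ _)
    · by_cases hn0 : n = 0
      · subst hn0; simpa [hni] using hm2 _ (le_max_right _ _)
      · simp [hni, hn0]
  · intro n
    dsimp only
    split_ifs
    exacts [hU.measurableSet, hV.measurableSet, MeasurableSet.univ]
  · intro x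
    by_cases hx : x ∈ U
    · refine ⟨0, ?_⟩
      show x ∉ (if 0 = i then U else if 0 = 0 then V else Set.univ)
      rw [if_neg (Ne.symm hi0)]
      simpa using fun hxV => Set.disjoint_left.1 hUV hx hxV
    · exact ⟨i, by simpa using hx⟩

theorem novikov {α : Type*} [TopologicalSpace α] [T2Space α] [MeasurableSpace α]
    [OpensMeasurableSpace α] (s : ℕ → Set α) (hs : ∀ n, AnalyticSet (s n))
    (h : ∀ x, ∃ n, x ∉ s n) : CSep s := by
  classical
  by_cases he : ∃ n, s n = ∅
  · obtain ⟨n, hn⟩ := he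
    refine ⟨fun k => if k = n then ∅ else Set.univ, ?_, ?_, fun x => ⟨n, by simp⟩⟩
    · intro k
      by_cases hk : k = n
      · subst hk; simp [hn]
      · simp [hk]
    · intro k
      dsimp only
      split_ifs <;> simp
  · push Not at he
    have : ∀ n, ∃ f : (ℕ → ℕ) → α, Continuous f ∧ Set.range f = s n := by
      intro n
      have := hs n
      rw [AnalyticSet] at this
      exact this.resolve_left (he n).ne_empty
    choose f hf hfs using this
    have : s = fun n => Set.range (f n) := by ext1 n; rw [hfs]
    rw [this]
    apply novikov_range f hf
    intro x
    obtain ⟨n, hn⟩ := h x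
    exact ⟨n, by rwa [hfs]⟩

theorem measurableSet_image_of_finite {X : Type*} [MetricSpace X] [CompactSpace X]
    [MeasurableSpace X] [BorelSpace X] (r : X → X) (hr : Measurable r)
    (hfin : ∀ x : X, (r ⁻¹' {x}).Finite) (B : Set X) (hB : MeasurableSet B) :
    MeasurableSet (r '' B) := by
  classical
  by_cases hXe : IsEmpty X
  · rw [Set.eq_empty_of_isEmpty (r '' B)]; exact MeasurableSet.empty
  have : PolishSpace X := inferInstance
  let b := TopologicalSpace.countableBasis X
  have hbc : b.Countable := TopologicalSpace.countable_countableBasis X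
  have hbb : TopologicalSpace.IsTopologicalBasis b := TopologicalSpace.isBasis_countableBasis X
  have hbne : b.Nonempty := by
    by_contra hcon
    rw [Set.not_nonempty_iff_eq_empty] at hcon
    have := hbb.sUnion_eq
    rw [hcon] at this
    simp only [Set.sUnion_empty] at this
    exact hXe (Set.univ_eq_empty_iff.1 this.symm)
  obtain ⟨V, hV⟩ := hbc.exists_eq_range hbne
  have hVo : ∀ n, IsOpen (V n) := fun n => hbb.isOpen (hV ▸ Set.mem_range_self n)
  -- complement of the graph
  let G : Set (X × X) := {q | q.2 ∈ B ∧ r q.2 = q.1}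
  have hG : MeasurableSet G :=
    (measurable_snd hB).inter (measurableSet_eq_fun (hr.comp measurable_snd) measurable_fst)
  have han : ∀ n, AnalyticSet (r '' (V n ∩ B)) := fun n =>
    ((hVo n).measurableSet.inter hB).analyticSet_image hr
  have hopen : ∀ q : X × X, q ∉ G → ∃ n, q.2 ∈ V n ∧ q.1 ∉ r '' (V n ∩ B) := by
    intro q hq
    have hcl : IsClosed (r ⁻¹' {q.1} ∩ B) := ((hfin q.1).subset Set.inter_subset_left).isClosed
    have hmem : q.2 ∈ (r ⁻¹' {q.1} ∩ B)ᶜ := fun hh => hq ⟨hh.2, hh.1⟩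
    obtain ⟨v, hvb, hqv, hv⟩ := hbb.exists_subset_of_mem_open hmem hcl.isOpen_compl
    rw [hV] at hvb
    obtain ⟨n, rfl⟩ := hvb
    refine ⟨n, hqv, ?_⟩
    rintro ⟨y, ⟨hy1, hy2⟩, hy3⟩
    exact hv hy1 ⟨hy3, hy2⟩
  let A : ℕ → Set (X × X) := fun n =>
    Gᶜ ∩ ((Prod.fst ⁻¹' (r '' (V n ∩ B))) ∪ (Prod.snd ⁻¹' (V n)ᶜ))
  have hA : ∀ n, AnalyticSet (A n) := by
    intro n
    have h2 : AnalyticSet ((Prod.fst ⁻¹' (r '' (V n ∩ B))) ∪ (Prod.snd ⁻¹' (V n)ᶜ) : Set (X × X)) := by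
      rw [Set.union_eq_iUnion]
      refine AnalyticSet.iUnion fun c => ?_
      cases c
      · exact (measurable_snd (hVo n).measurableSet.compl).analyticSet
      · exact (han n).preimage continuous_fst
    show AnalyticSet (Gᶜ ∩ _)
    rw [Set.inter_eq_iInter]
    refine AnalyticSet.iInter fun c => ?_
    cases c
    · exact h2
    · exact hG.compl.analyticSet
  obtain ⟨D, hAD, hDm, hDe⟩ := novikov A hA (by
    intro q
    by_cases hq : q ∈ G
    · exact ⟨0, fun hh => hh.1 hq⟩
    · obtain ⟨n, hn1, hn2⟩ := hopen q hq
      refine ⟨n, fun hh => ?_⟩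
      rcases hh.2 with h | h
      · exact hn2 h
      · exact h hn1)
  have hsub : ∀ n, ∀ q ∈ Gᶜ \ D n, q.2 ∈ V n ∧ q.1 ∉ r '' (V n ∩ B) := by
    intro n q hq
    have : q ∉ A n := fun hh => hq.2 (hAD n hh)
    by_contra hcon
    apply this
    refine ⟨hq.1, ?_⟩
    by_cases h1 : q.2 ∈ V n
    · left
      by_contra h2
      exact hcon ⟨h1, h2⟩
    · right; exact h1
  have hsep : ∀ n, MeasurablySeparable (Prod.fst '' (Gᶜ \ D n)) (r '' (V n ∩ B)) := by
    intro n
    apply AnalyticSet.measurablySeparable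
    · exact (hG.compl.diff (hDm n)).analyticSet_image measurable_fst
    · exact han n
    · rw [Set.disjoint_left]
      rintro _ ⟨q, hq, rfl⟩ h2
      exact (hsub n q hq).2 h2
  choose E hE1 hE2 hE3 using hsep
  have hfinal : (r '' B)ᶜ = ⋃ F : {F : Finset ℕ // (⋃ n ∈ F, V n) = Set.univ}, ⋂ n ∈ F.1, E n := by
    ext x
    simp only [Set.mem_iUnion, Set.mem_iInter]
    constructor
    · intro hx
      have hcov : (Set.univ : Set X) ⊆ ⋃ n : {n // x ∈ E n}, V n := by
        intro y _
        have hq : (x, y) ∈ Gᶜ := fun hh => hx ⟨y, hh.1, hh.2⟩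
        obtain ⟨n, hn⟩ := hDe (x, y)
        refine Set.mem_iUnion.2 ⟨⟨n, hE1 n ⟨(x, y), ⟨hq, hn⟩, rfl⟩⟩, (hsub n _ ⟨hq, hn⟩).1⟩
      obtain ⟨F, hF⟩ := isCompact_univ.elim_finite_subcover (fun n : {n // x ∈ E n} => V n.1) (fun n => hVo n.1) hcov
      refine ⟨⟨F.image Subtype.val, ?_⟩, ?_⟩
      · apply Set.eq_univ_of_univ_subset
        refine hF.trans ?_
        intro y hy
        simp only [Set.mem_iUnion] at hy ⊢
        obtain ⟨n, hn, hyn⟩ := hy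
        exact ⟨n.1, Finset.mem_image_of_mem _ hn, hyn⟩
      · intro n hn
        obtain ⟨k, _, rfl⟩ := Finset.mem_image.1 hn
        exact k.2
    · rintro ⟨⟨F, hF⟩, hx⟩ ⟨y, hyB, rfl⟩
      have : y ∈ ⋃ n ∈ F, V n := hF ▸ Set.mem_univ y
      simp only [Set.mem_iUnion] at this
      obtain ⟨n, hn, hyn⟩ := this
      exact Set.disjoint_left.1 (hE2 n) ⟨y, ⟨hyn, hyB⟩, rfl⟩ (hx n hn)
  rw [← MeasurableSet.compl_iff, hfinal]
  exact MeasurableSet.iUnion fun F => Finset.measurableSet_biInter _ fun n _ => hE3 n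

theorem measurable_count_fiber {X : Type*} [MetricSpace X] [CompactSpace X]
    [MeasurableSpace X] [BorelSpace X] (r : X → X) (hr : Measurable r)
    (hfin : ∀ x : X, (r ⁻¹' {x}).Finite) (B : Set X) (hB : MeasurableSet B) :
    Measurable fun x => (Measure.count : Measure X) (B ∩ r ⁻¹' {x}) := by
  classical
  obtain ⟨g, hg, hgi⟩ := MeasurableSpace.measurable_injection_nat_bool_of_countablySeparated X
  let π : (m : ℕ) → X → (Fin m → Bool) := fun m y i => g y i
  let Q : (m : ℕ) → (Fin m → Bool) → Set X := fun m σ => {y | π m y = σ}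
  have hQ : ∀ m σ, MeasurableSet (Q m σ) := by
    intro m σ
    have : Measurable (π m) :=
      measurable_pi_lambda _ fun i => (measurable_pi_apply (i : ℕ)).comp hg
    exact this (MeasurableSet.singleton σ)
  refine measurable_of_tendsto_metrizable
    (f := fun m x => ∑ σ : Fin m → Bool, (r '' (B ∩ Q m σ)).indicator (fun _ => (1 : ℝ≥0∞)) x)
    ?_ ?_
  · intro m
    refine Finset.measurable_sum _ fun σ _ => ?_
    exact measurable_const.indicator
      (measurableSet_image_of_finite r hr hfin _ (hB.inter (hQ m σ)))
  · rw [tendsto_pi_nhds]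
    intro x
    have hF : (B ∩ r ⁻¹' {x}).Finite := (hfin x).subset Set.inter_subset_right
    have hinj : ∀ᶠ m in atTop, Set.InjOn (π m) (B ∩ r ⁻¹' {x}) := by
      have : ∀ y ∈ B ∩ r ⁻¹' {x}, ∀ y' ∈ B ∩ r ⁻¹' {x},
          ∀ᶠ m in atTop, π m y = π m y' → y = y' := by
        intro y _ y' _
        by_cases hyy : y = y'
        · exact Eventually.of_forall fun _ _ => hyy
        · have : g y ≠ g y' := fun h => hyy (hgi h)
          obtain ⟨k, hk⟩ := Function.ne_iff.1 this
          filter_upwards [eventually_gt_atTop k] with m hm h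
          exact absurd (congrFun h ⟨k, hm⟩) hk
      have h2 := (Filter.eventually_all_finite hF).2
        (fun y hy => (Filter.eventually_all_finite hF).2 (this y hy))
      filter_upwards [h2] with m hm
      intro y hy y' hy' h
      exact hm y hy y' hy' h
    refine tendsto_const_nhds.congr' ?_
    filter_upwards [hinj] with m hm
    rw [Measure.count_apply_finite _ hF]
    have h1 : ∀ σ : Fin m → Bool, (r '' (B ∩ Q m σ)).indicator (fun _ => (1 : ℝ≥0∞)) x
        = if σ ∈ hF.toFinset.image (π m) then 1 else 0 := by
      intro σ
      rw [Set.indicator_apply]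
      refine if_congr ?_ rfl rfl
      simp only [Set.mem_image, Finset.mem_image, Set.Finite.mem_toFinset, Set.mem_inter_iff, Q,
        Set.mem_ofPred_eq, Set.mem_preimage, Set.mem_singleton_iff]
      constructor
      · rintro ⟨y, ⟨a, b⟩, c⟩; exact ⟨y, ⟨a, c⟩, b⟩
      · rintro ⟨y, ⟨a, b⟩, c⟩; exact ⟨y, ⟨a, c⟩, b⟩
    simp only [h1, Finset.sum_ite_mem, Finset.univ_inter, Finset.sum_const, nsmul_eq_mul, mul_one]
    rw [Finset.card_image_of_injOn]
    simpa using hm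

theorem measurable_fiber_sum {X : Type*} [MetricSpace X] [CompactSpace X]
    [MeasurableSpace X] [BorelSpace X] (r : X → X) (hr : Measurable r)
    (hfin : ∀ x : X, (r ⁻¹' {x}).Finite) (f : X → ℝ≥0∞) (hf : Measurable f) :
    Measurable fun x => ∑' y : r ⁻¹' {x}, f y.1 := by
  have hκ : Measurable fun x => (Measure.count : Measure X).restrict (r ⁻¹' {x}) := by
    refine Measure.measurable_of_measurable_coe _ fun B hB => ?_
    simp only [Measure.restrict_apply hB]
    exact measurable_count_fiber r hr hfin B hB
  have h2 := (Measure.measurable_lintegral hf).comp hκ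
  convert h2 using 2 with x
  simp only [Function.comp]
  rw [lintegral_countable _ (hfin x).countable]
  simp

theorem measurable_card_fiber {X : Type*} [MetricSpace X] [CompactSpace X]
    [MeasurableSpace X] [BorelSpace X] (r : X → X) (hr : Measurable r)
    (hfin : ∀ x : X, (r ⁻¹' {x}).Finite) :
    Measurable fun x => (Nat.card (r ⁻¹' {x}) : ℝ) := by
  have h := (measurable_count_fiber r hr hfin Set.univ MeasurableSet.univ).ennreal_toReal
  convert h using 2 with x
  rw [Set.univ_inter, Measure.count_apply_finite _ (hfin x), Nat.card_coe_set_eq,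
    Set.ncard_eq_toFinset_card _ (hfin x)]
  simp

theorem sol_iter {X : Type*} (r : X → X) (z : Solenoid r) (k : ℕ) (n : ℤ) :
    r^[k] (z.1 (n + k)) = z.1 n := by
  induction k with
  | zero => simp
  | succ k ih =>
    rw [Function.iterate_succ_apply, ← ih]
    congr 1
    rw [← z.2 (n + k)]
    congr 2
    push_cast
    ring

theorem sol_iter' {X : Type*} (r : X → X) (z : Solenoid r) (k : ℕ) (n m : ℤ) (h : m = n + k) :
    r^[k] (z.1 m) = z.1 n := by
  subst h; exact sol_iter r z k n

theorem sol_ext {X : Type*} (r : X → X) (z w : Solenoid r) (h : ∀ n : ℕ, z.1 n = w.1 n) :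
    z = w := by
  apply Subtype.ext
  funext n
  obtain ⟨k, rfl | rfl⟩ := n.eq_nat_or_neg
  · exact h k
  · rw [← sol_iter' r z k (-k) 0 (by ring), ← sol_iter' r w k (-k) 0 (by ring)]
    rw [show z.1 0 = w.1 0 from h 0]

theorem sol_meas {X : Type*} [MeasurableSpace X] (r : X → X) (n : ℤ) :
    Measurable fun z : Solenoid r => z.1 n :=
  (measurable_pi_apply n).comp measurable_subtype_coe

theorem cylOK_path {X : Type*} (r : X → X) (x : X) (n : ℕ) (y : X) (hy : r^[n] y = x) :
    cylOK r x n (fun j => r^[n - 1 - j] y) := by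
  constructor
  · intro h
    rw [← hy]
    show r (r^[n - 1 - 0] y) = _
    rw [← Function.iterate_succ_apply' r]
    congr 2
    omega
  · intro j hj
    show r (r^[n - 1 - (j + 1)] y) = r^[n - 1 - j] y
    rw [← Function.iterate_succ_apply' r]
    congr 2
    omega

theorem cylSet_path {X : Type*} (r : X → X) (x : X) (n : ℕ) (y : X) (hy : r^[n] y = x) :
    cylSet r x n (fun j => r^[n - 1 - j] y) = {z | z.1 0 = x ∧ z.1 n = y} := by
  ext z
  simp only [cylSet, Set.mem_ofPred_eq]
  constructor
  · rintro ⟨h0, h⟩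
    refine ⟨h0, ?_⟩
    cases n with
    | zero => simpa [h0] using hy.symm
    | succ n =>
      have := h ⟨n, by omega⟩
      simpa using this
  · rintro ⟨h0, h⟩
    refine ⟨h0, fun j => ?_⟩
    rw [← h]
    symm
    apply sol_iter'
    have := j.2
    omega

theorem P_eval {X : Type*} [MeasurableSpace X] [MeasurableSingletonClass X] (r : X → X)
    (hfin : ∀ (n : ℕ) (x : X), (r^[n] ⁻¹' {x}).Finite)
    (W : X → ℝ≥0∞) (P : X → Measure (Solenoid r)) (hP : IsPathMeasureFamily r W P)
    (n : ℕ) (B : Set X) (hB : MeasurableSet B) (x : X) :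
    P x {z | z.1 n ∈ B} = ∑' y : r^[n] ⁻¹' {x},
      (B.indicator (fun _ => (1 : ℝ≥0∞)) y.1 * ∏ j : Fin n, W (r^[n - 1 - j] y.1)) := by
  classical
  obtain ⟨h1, h2, h3⟩ := hP
  have := h1 x
  have hΩm : MeasurableSet {ω : Solenoid r | ω.1 0 = x} :=
    sol_meas r 0 (MeasurableSet.singleton x)
  have hae : ∀ᵐ z ∂(P x), z.1 0 = x := by
    rw [ae_iff]
    exact (prob_compl_eq_zero_iff hΩm).2 (h2 x)
  have hset : P x {z | z.1 n ∈ B} = P x (⋃ y ∈ r^[n] ⁻¹' {x},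
      {z : Solenoid r | z.1 0 = x ∧ z.1 n = y ∧ y ∈ B}) := by
    apply measure_congr
    filter_upwards [hae] with z hz
    apply propext
    show z.1 n ∈ B ↔ z ∈ (⋃ y ∈ r^[n] ⁻¹' {x}, {z : Solenoid r | z.1 0 = x ∧ z.1 n = y ∧ y ∈ B})
    simp only [Set.mem_iUnion, Set.mem_ofPred_eq]
    constructor
    · intro h
      refine ⟨z.1 n, ?_, hz, rfl, h⟩
      show r^[n] (z.1 n) = x
      rw [← hz]; apply sol_iter'; ring
    · rintro ⟨y, _, _, h, h'⟩
      rwa [h]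
  rw [hset, measure_biUnion (hfin n x).countable]
  · refine tsum_congr fun y => ?_
    by_cases hy : y.1 ∈ B
    · have := h3 x n _ (cylOK_path r x n y.1 y.2)
      rw [cylSet_path r x n y.1 y.2] at this
      simp only [hy, and_true, Set.indicator_of_mem, one_mul, this]
    · simp [hy]
  · intro y _ y' _ hyy
    rw [Function.onFun, Set.disjoint_left]
    rintro z ⟨_, h, _⟩ ⟨_, h', _⟩
    exact hyy (h.symm.trans h')
  · intro y _
    by_cases hy : y ∈ B
    · simp only [hy, and_true]
      exact hΩm.inter (sol_meas r n (MeasurableSet.singleton y))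
    · simp [hy]

theorem iter_fin {X : Type*} (r : X → X) (hfin : ∀ x : X, (r ⁻¹' {x}).Finite) (n : ℕ) (x : X) :
    (r^[n] ⁻¹' {x}).Finite := by
  induction n with
  | zero => simp
  | succ n ih =>
    rw [Function.iterate_succ, Set.preimage_comp]
    exact ih.preimage' fun b _ => hfin b

theorem P_measurable {X : Type*} [MetricSpace X] [CompactSpace X] [MeasurableSpace X]
    [BorelSpace X] (r : X → X) (hr : Measurable r)
    (hfin : ∀ x : X, (r ⁻¹' {x}).Finite)
    (W : X → ℝ≥0∞) (hW : Measurable W)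
    (P : X → Measure (Solenoid r)) (hP : IsPathMeasureFamily r W P) : Measurable P := by
  have := hP.1
  refine Measurable.measure_of_isPiSystem_of_isProbabilityMeasure
    (S := {s | ∃ (n : ℕ) (B : Set X), MeasurableSet B ∧ s = {z : Solenoid r | z.1 n ∈ B}})
    ?_ ?_ ?_
  · apply le_antisymm
    · have hcoord : ∀ n : ℤ, @Measurable _ _ (MeasurableSpace.generateFrom
          {s | ∃ (n : ℕ) (B : Set X), MeasurableSet B ∧ s = {z : Solenoid r | z.1 n ∈ B}}) _
          (fun z : Solenoid r => z.1 n) := by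
        intro n
        obtain ⟨k, rfl | rfl⟩ := n.eq_nat_or_neg
        · intro B hB
          exact MeasurableSpace.measurableSet_generateFrom ⟨k, B, hB, rfl⟩
        · have : (fun z : Solenoid r => z.1 (-k)) = fun z => r^[k] (z.1 ((0 : ℕ) : ℤ)) := by
            funext z
            symm; apply sol_iter'; simp
          rw [this]
          intro B hB
          exact MeasurableSpace.measurableSet_generateFrom ⟨0, _, hr.iterate k hB, rfl⟩
      have hsub : @Measurable _ _ (MeasurableSpace.generateFrom
          {s | ∃ (n : ℕ) (B : Set X), MeasurableSet B ∧ s = {z : Solenoid r | z.1 n ∈ B}}) _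
          (fun z : Solenoid r => z.1) := by
        apply @measurable_pi_lambda _ _ _ (_) _ _ hcoord
      exact hsub.comap_le
    · apply MeasurableSpace.generateFrom_le
      rintro _ ⟨n, B, hB, rfl⟩
      exact sol_meas r n hB
  · have key : ∀ (n m : ℕ) (A B : Set X), n ≤ m → MeasurableSet A → MeasurableSet B →
        ∃ (k : ℕ) (D : Set X), MeasurableSet D ∧
        {z : Solenoid r | z.1 n ∈ A} ∩ {z : Solenoid r | z.1 m ∈ B} = {z | z.1 k ∈ D} := by
      intro n m A B hnm hA hB
      refine ⟨m, r^[m - n] ⁻¹' A ∩ B, (hr.iterate _ hA).inter hB, ?_⟩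
      ext z
      have : r^[m - n] (z.1 m) = z.1 n := by apply sol_iter'; omega
      simp [this]
    rintro _ ⟨n, A, hA, rfl⟩ _ ⟨m, B, hB, rfl⟩ _
    rcases le_total n m with h | h
    · exact key n m A B h hA hB
    · rw [Set.inter_comm]
      exact key m n B A h hB hA
  · rintro _ ⟨n, B, hB, rfl⟩
    simp_rw [P_eval r (iter_fin r hfin) W P hP n B hB]
    apply measurable_fiber_sum (r^[n]) (hr.iterate n) (iter_fin r hfin n)
      (fun y => B.indicator (fun _ => (1 : ℝ≥0∞)) y * ∏ j : Fin n, W (r^[n - 1 - j] y))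
    refine (measurable_const.indicator hB).mul ?_
    exact Finset.measurable_prod _ fun j _ => hW.comp (hr.iterate _)

theorem P_singleton {X : Type*} [MeasurableSpace X] [MeasurableSingletonClass X] (r : X → X)
    (W : X → ℝ≥0∞) (P : X → Measure (Solenoid r)) (hP : IsPathMeasureFamily r W P)
    (x : X) (ω : Solenoid r) (hω : ω.1 0 = x) :
    Tendsto (fun n : ℕ => ∏ k ∈ Finset.range n, W (ω.1 ((k : ℤ) + 1))) atTop (𝓝 (P x {ω})) := by
  obtain ⟨h1, h2, h3⟩ := hP
  have := h1 x
  have hcyl : ∀ n : ℕ, P x (cylSet r x n (fun j => ω.1 ((j : ℕ) + 1)))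
      = ∏ k ∈ Finset.range n, W (ω.1 ((k : ℤ) + 1)) := by
    intro n
    rw [h3, Finset.prod_range]
    constructor
    · intro h
      rw [← hω, ← ω.2 0]; rfl
    · intro j hj
      show r (ω.1 (((j + 1 : ℕ) : ℤ) + 1)) = ω.1 ((j : ℤ) + 1)
      rw [ω.2]; push_cast; rfl
  simp_rw [← hcyl]
  have hint : ({ω} : Set (Solenoid r)) = ⋂ n : ℕ, cylSet r x n (fun j => ω.1 ((j : ℕ) + 1)) := by
    ext z
    simp only [Set.mem_singleton_iff, Set.mem_iInter]
    constructor
    · rintro rfl n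
      exact ⟨hω, fun j => rfl⟩
    · intro h
      apply sol_ext
      intro n
      cases n with
      | zero => exact (h 0).1.trans hω.symm
      | succ n =>
        have := (h (n + 1)).2 ⟨n, by omega⟩
        simpa using this
  rw [hint]
  apply tendsto_measure_iInter_atTop
  · intro n
    apply MeasurableSet.nullMeasurableSet
    have : cylSet r x n (fun j => ω.1 ((j : ℕ) + 1)) = {z : Solenoid r | z.1 0 = x} ∩
        ⋂ j : Fin n, {z : Solenoid r | z.1 ((j : ℕ) + 1) = ω.1 ((j : ℕ) + 1)} := by
      ext z; simp [cylSet]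
    rw [this]
    exact (sol_meas r 0 (MeasurableSet.singleton x)).inter
      (MeasurableSet.iInter fun j => sol_meas r _ (MeasurableSet.singleton _))
  · intro n m hnm z hz
    exact ⟨hz.1, fun j => hz.2 ⟨j, by omega⟩⟩
  · exact ⟨0, measure_ne_top _ _⟩

theorem countable_of_injOn {X : Type*} (r : X → X) (hfin : ∀ x : X, (r ⁻¹' {x}).Finite)
    (I : Set X) (hI : Set.InjOn r I) (x : X) (N : Set (Solenoid r))
    (hN : ∀ z ∈ N, z.1 0 = x ∧ ∀ᶠ n : ℕ in atTop, z.1 n ∈ I) : N.Countable := by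
  have hsub : N ⊆ ⋃ n : ℕ, {z : Solenoid r | z.1 0 = x ∧ ∀ k : ℕ, n ≤ k → z.1 k ∈ I} := by
    intro z hz
    obtain ⟨h0, h⟩ := hN z hz
    obtain ⟨n, hn⟩ := eventually_atTop.1 h
    exact Set.mem_iUnion.2 ⟨n, h0, hn⟩
  refine Set.Countable.mono hsub (Set.countable_iUnion fun n => Set.Finite.countable ?_)
  refine Set.Finite.of_finite_image (f := fun z : Solenoid r => z.1 n)
    ((iter_fin r hfin n x).subset ?_) ?_
  · rintro _ ⟨z, ⟨hz, _⟩, rfl⟩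
    show r^[n] (z.1 n) = x
    rw [← hz]; apply sol_iter'; ring
  · rintro z ⟨_, hz⟩ w ⟨_, hw⟩ hzw
    have hge : ∀ k : ℕ, n ≤ k → z.1 k = w.1 k := by
      intro k hk
      induction k, hk using Nat.le_induction with
      | base => exact hzw
      | succ k hk ih =>
        refine hI (hz _ (by omega)) (hw _ (by omega)) ?_
        push_cast
        rw [z.2, w.2, ih]
    apply sol_ext
    intro k
    rw [← sol_iter r z n k, ← sol_iter r w n k]
    have := hge (k + n) (by omega)
    push_cast at this
    rw [this]

theorem path_asymp {X : Type*} [TopologicalSpace X] (r : X → X) {p : ℕ} (hp : 0 < p)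
    (xc : ZMod p → X) (hcyc : ∀ i : ZMod p, r (xc (i + 1)) = xc i)
    (hrc : ∀ i : ZMod p, ContinuousAt r (xc i)) (z : Solenoid r) (i : ZMod p)
    (hz : Tendsto (fun n : ℕ => z.1 ((p : ℤ) * (n : ℤ))) atTop (𝓝 (xc i)))
    (Q : ZMod p → X → Prop) (hQ : ∀ i, ∀ᶠ y in 𝓝 (xc i), Q i y) :
    ∀ᶠ n : ℕ in atTop, Q (i + n) (z.1 n) := by
  have hit : ∀ (k : ℕ) (i : ZMod p), Tendsto (r^[k]) (𝓝 (xc (i + k))) (𝓝 (xc i)) := by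
    intro k
    induction k with
    | zero => intro i; simpa using tendsto_id
    | succ k ih =>
      intro i
      rw [Function.iterate_succ]
      refine (ih i).comp ?_
      have := (hrc (i + k + 1)).tendsto
      rw [hcyc] at this
      have h2 : i + ((k + 1 : ℕ) : ZMod p) = i + k + 1 := by push_cast; ring
      rw [h2]
      exact this
  have hj : ∀ j : ℕ, j < p → Tendsto (fun n : ℕ => z.1 ((p : ℤ) * n + j)) atTop (𝓝 (xc (i + j))) := by
    intro j hjp
    have h1 := hit (p - j) (i + j)
    have h2 : i + (j : ZMod p) + ((p - j : ℕ) : ZMod p) = i := by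
      rw [Nat.cast_sub hjp.le]; simp
    rw [h2] at h1
    have h3 := h1.comp (hz.comp (tendsto_add_atTop_nat 1))
    refine h3.congr fun n => ?_
    simp only [Function.comp]
    apply sol_iter'
    push_cast [Nat.cast_sub hjp.le]
    ring
  have hall : ∀ᶠ n : ℕ in atTop, ∀ j ∈ Finset.range p, Q (i + j) (z.1 ((p : ℤ) * n + j)) := by
    rw [Filter.eventually_all_finset]
    intro j hjm
    exact (hj j (Finset.mem_range.1 hjm)).eventually (hQ _)
  obtain ⟨n0, hn0⟩ := eventually_atTop.1 hall
  refine eventually_atTop.2 ⟨p * n0, fun m hm => ?_⟩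
  have h1 := hn0 (m / p) ((Nat.le_div_iff_mul_le hp).2 (by rwa [mul_comm] at hm)) (m % p)
    (Finset.mem_range.2 (Nat.mod_lt _ hp))
  have h2 : ((m % p : ℕ) : ZMod p) = m := by simp
  rw [h2] at h1
  have h3 : (p : ℤ) * ((m / p : ℕ) : ℤ) + ((m % p : ℕ) : ℤ) = m := by
    exact_mod_cast Nat.div_add_mod m p
  rwa [h3] at h1

theorem summable_residues {p : ℕ} (hp : 0 < p) (f : ℕ → ℝ) (hf : ∀ n, 0 ≤ f n)
    (h : ∀ j < p, Summable fun n : ℕ => f (p * n + j)) : Summable f := by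
  have : NeZero p := ⟨hp.ne'⟩
  rw [← ((Equiv.prodComm _ _).trans (Nat.divModEquiv p).symm).summable_iff]
  refine (summable_prod_of_nonneg (fun _ => hf _)).2 ?_
  refine ⟨fun j => ?_, (hasSum_fintype _).summable⟩
  convert h j j.2 using 2 with n
  simp [Nat.divModEquiv, mul_comm, add_comm]

theorem summable_beta {X : Type*} [MetricSpace X] (r : X → X) {p : ℕ} (hp : 0 < p)
    (xc : ZMod p → X) (hcyc : ∀ i : ZMod p, r (xc (i + 1)) = xc i)
    (hrc : ∀ i : ZMod p, ContinuousAt r (xc i))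
    (hrep : ∀ i : ZMod p, ∃ c δ : ℝ, 0 < c ∧ c < 1 ∧ 0 < δ ∧ ∀ x : X,
      0 < dist x (xc i) → dist x (xc i) < δ → c⁻¹ * dist x (xc i) < dist (r^[p] x) (xc i))
    (β : ℝ → ℝ) (hβmono : MonotoneOn β (Set.Ici 0)) (hβ0 : ∀ t : ℝ, 0 ≤ t → 0 ≤ β t)
    (hβsum : ∀ A : ℝ, 0 < A → ∀ c : ℝ, 0 < c → c < 1 →
      Summable fun k : ℕ => β (A * c ^ (k + 1)))
    (z : Solenoid r) (i : ZMod p)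
    (hz : Tendsto (fun n : ℕ => z.1 ((p : ℤ) * (n : ℤ))) atTop (𝓝 (xc i))) :
    Summable fun n : ℕ => β (dist (z.1 n) (xc (i + n))) := by
  choose c δ hc0 hc1 hδ hcon using hrep
  apply summable_residues hp _ (fun n => hβ0 _ dist_nonneg)
  intro j hj
  have hev := path_asymp r hp xc hcyc hrc z i hz (fun i y => dist y (xc i) < δ i)
    (fun i => Metric.ball_mem_nhds _ (hδ i))
  obtain ⟨n0, hn0⟩ := eventually_atTop.1 hev
  set l : ZMod p := i + j with hl
  let d : ℕ → ℝ := fun n => dist (z.1 ((p * n + j : ℕ) : ℤ)) (xc l)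
  have hd : ∀ n, dist (z.1 ((p * n + j : ℕ) : ℤ)) (xc (i + ((p * n + j : ℕ) : ZMod p))) = d n := by
    intro n
    simp [d, hl]
  have hstep : ∀ n, n0 ≤ n → d (n + 1) ≤ c l * d n := by
    intro n hn
    have hlt : d (n + 1) < δ l := by
      have := hn0 (p * (n + 1) + j) (by nlinarith)
      rw [hd] at this
      simpa [hl] using this
    rcases (dist_nonneg : 0 ≤ d (n + 1)).eq_or_lt with h0 | h0
    · have h0' : d (n + 1) = 0 := h0.symm
      rw [h0']
      exact mul_nonneg (hc0 l).le dist_nonneg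
    · have := hcon l (z.1 ((p * (n + 1) + j : ℕ) : ℤ)) h0 hlt
      rw [sol_iter' r z p ((p * n + j : ℕ) : ℤ) _ (by push_cast; ring)] at this
      have h2 : (c l)⁻¹ * d (n + 1) < d n := this
      rw [inv_mul_lt_iff₀ (hc0 l)] at h2
      exact h2.le
  have hgeo : ∀ k, d (n0 + k) ≤ d n0 * c l ^ k := by
    intro k
    induction k with
    | zero => simp
    | succ k ih =>
      calc d (n0 + (k + 1)) ≤ c l * d (n0 + k) := hstep (n0 + k) (by omega)
        _ ≤ c l * (d n0 * c l ^ k) := by gcongr; exact (hc0 l).le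
        _ = _ := by ring
  simp_rw [hd]
  rw [← summable_nat_add_iff n0]
  have hdn : 0 ≤ d n0 := dist_nonneg
  refine Summable.of_nonneg_of_le (fun k => hβ0 _ dist_nonneg) (fun k => ?_)
    (hβsum ((d n0 + 1) / c l) (div_pos (by linarith) (hc0 l)) (c l) (hc0 l) (hc1 l))
  have hck : 0 < c l ^ k := pow_pos (hc0 l) k
  have heq : (d n0 + 1) / c l * c l ^ (k + 1) = (d n0 + 1) * c l ^ k := by
    rw [pow_succ]; field_simp [(hc0 l).ne']
  rw [heq]
  refine hβmono (dist_nonneg : 0 ≤ d (k + n0)) (Set.mem_Ici.2 (by positivity)) ?_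
  rw [add_comm k n0]
  refine (hgeo k).trans ?_
  nlinarith

theorem phi_tendsto {X : Type*} [MetricSpace X] (r : X → X)
    (hfin : ∀ x : X, (r ⁻¹' {x}).Finite) (hne : ∀ x : X, (r ⁻¹' {x}).Nonempty)
    {p : ℕ} (hp : 0 < p) (xc : ZMod p → X)
    (hcyc : ∀ i : ZMod p, r (xc (i + 1)) = xc i)
    (α : ZMod p → ℂ) (hα : ∀ i, ‖α i‖ = 1)
    (ι : Solenoid r → ZMod p)
    (hrep : ∀ i : ZMod p, ∃ c δ : ℝ, 0 < c ∧ c < 1 ∧ 0 < δ ∧ ∀ x : X,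
      0 < dist x (xc i) → dist x (xc i) < δ → c⁻¹ * dist x (xc i) < dist (r^[p] x) (xc i))
    (hrc : ∀ i : ZMod p, ContinuousAt r (xc i))
    (hccr : ∀ i : ZMod p, ∀ᶠ y in 𝓝 (xc i),
      Nat.card (r ⁻¹' {r y}) = Nat.card (r ⁻¹' {r (xc i)}))
    (m0 : X → ℂ)
    (β : ℝ → ℝ) (hβmono : MonotoneOn β (Set.Ici 0)) (hβ0 : ∀ t : ℝ, 0 ≤ t → 0 ≤ β t)
    (hβsum : ∀ A : ℝ, 0 < A → ∀ c : ℝ, 0 < c → c < 1 →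
      Summable fun k : ℕ => β (A * c ^ (k + 1)))
    (hβlip : ∀ i : ZMod p, ∀ᶠ y in 𝓝 (xc i), ‖m0 y - m0 (xc i)‖ ≤ β (dist y (xc i)))
    (hlp : ∀ i : ZMod p, m0 (xc i) = α i * (Real.sqrt (Nat.card (r ⁻¹' {r (xc i)})) : ℂ))
    (z : Solenoid r)
    (hz : Tendsto (fun n : ℕ => z.1 ((p : ℤ) * (n : ℤ))) atTop (𝓝 (xc (ι z)))) :
    Tendsto (fun n : ℕ => ∏ k ∈ Finset.range n, ENNReal.ofReal
      (‖m0 (z.1 ((k : ℤ) + 1))‖ ^ 2 / (Nat.card (r ⁻¹' {r (z.1 ((k : ℤ) + 1))}) : ℝ))) atTop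
      (𝓝 (ENNReal.ofReal (‖scalingFn r α ι m0 z‖ ^ 2))) := by
  have hN : ∀ x, (1 : ℝ) ≤ Nat.card (r ⁻¹' {x}) := by
    intro x
    have : Finite (r ⁻¹' {x}) := hfin x
    have : Nonempty (r ⁻¹' {x}) := (hne x).to_subtype
    exact_mod_cast Nat.card_pos
  let t : ℕ → ℂ := fun k => (α (ι z + ((k + 1 : ℕ) : ZMod p)))⁻¹ * m0 (z.1 ((k : ℤ) + 1)) /
    (Real.sqrt (Nat.card (r ⁻¹' {r (z.1 ((k : ℤ) + 1))})) : ℂ)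
  have hsum := summable_beta r hp xc hcyc hrc hrep β hβmono hβ0 hβsum z (ι z) hz
  have hev := path_asymp r hp xc hcyc hrc z (ι z) hz
    (fun i y => Nat.card (r ⁻¹' {r y}) = Nat.card (r ⁻¹' {r (xc i)}) ∧
      ‖m0 y - m0 (xc i)‖ ≤ β (dist y (xc i))) (fun i => (hccr i).and (hβlip i))
  have hev1 := (tendsto_add_atTop_nat 1).eventually hev
  have hsum1 := (summable_nat_add_iff 1).2 hsum
  have hts : Summable fun k => ‖t k - 1‖ := by
    refine Summable.of_norm_bounded_eventually_nat hsum1 ?_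
    filter_upwards [hev1] with k hk
    obtain ⟨h1, h2⟩ := hk
    rw [norm_norm]
    refine le_trans ?_ h2
    have hcast : (((k + 1 : ℕ) : ℤ)) = (k : ℤ) + 1 := by push_cast; rfl
    rw [hcast] at h1 h2 ⊢
    set a := α (ι z + ((k + 1 : ℕ) : ZMod p)) with ha
    set y := z.1 ((k : ℤ) + 1) with hy
    have ha1 : ‖a‖ = 1 := hα _
    have ha0 : a ≠ 0 := by intro h; rw [h] at ha1; simp at ha1
    have hlp' := hlp (ι z + ((k + 1 : ℕ) : ZMod p))
    rw [← h1] at hlp'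
    set s : ℝ := Real.sqrt (Nat.card (r ⁻¹' {r y})) with hs
    have hs1 : 1 ≤ s := Real.one_le_sqrt.2 (hN _)
    have hs0 : (s : ℂ) ≠ 0 := by
      have : s ≠ 0 := by linarith
      exact_mod_cast this
    have hteq : t k - 1 = a⁻¹ * (m0 y - a * s) / s := by
      show a⁻¹ * m0 y / (s : ℂ) - 1 = _
      field_simp
    rw [hteq, hlp', norm_div, norm_mul, norm_inv, ha1, inv_one, one_mul, Complex.norm_real,
      Real.norm_of_nonneg (by linarith)]
    exact div_le_self (norm_nonneg _) hs1
  have hmul : Multipliable t := by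
    have := multipliable_one_add_of_summable hts
    simpa using this
  have hlim := hmul.hasProd.tendsto_prod_nat
  have hlim2 : Tendsto (fun n => ENNReal.ofReal (‖∏ k ∈ Finset.range n, t k‖ ^ 2)) atTop
      (𝓝 (ENNReal.ofReal (‖scalingFn r α ι m0 z‖ ^ 2))) :=
    ENNReal.tendsto_ofReal ((hlim.norm).pow 2)
  refine hlim2.congr fun n => ?_
  rw [norm_prod, ← Finset.prod_pow, ENNReal.ofReal_prod_of_nonneg (fun _ _ => by positivity)]
  refine Finset.prod_congr rfl fun k _ => ?_
  congr 1
  simp only [t]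
  rw [norm_div, norm_mul, norm_inv, hα, inv_one, one_mul, Complex.norm_real,
    Real.norm_of_nonneg (Real.sqrt_nonneg _), div_pow, Real.sq_sqrt (by positivity)]

theorem m0_tendsto {X : Type*} [MetricSpace X] (x : X) (m0 : X → ℂ)
    (β : ℝ → ℝ) (hβmono : MonotoneOn β (Set.Ici 0))
    (hβsum : ∀ A : ℝ, 0 < A → ∀ c : ℝ, 0 < c → c < 1 →
      Summable fun k : ℕ => β (A * c ^ (k + 1)))
    (hβlip : ∀ᶠ y in 𝓝 x, ‖m0 y - m0 x‖ ≤ β (dist y x)) : Tendsto m0 (𝓝 x) (𝓝 (m0 x)) := by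
  rw [Metric.tendsto_nhds]
  intro ε hε
  have h0 := (hβsum 1 one_pos (1 / 2) (by norm_num) (by norm_num)).tendsto_atTop_zero
  obtain ⟨k, hk⟩ := (h0.eventually (gt_mem_nhds hε)).exists
  have hpos : (0 : ℝ) < 1 * (1 / 2) ^ (k + 1) := by positivity
  filter_upwards [hβlip, Metric.ball_mem_nhds x hpos] with y hy hy2
  rw [dist_eq_norm]
  refine hy.trans_lt (lt_of_le_of_lt ?_ hk)
  exact hβmono (Set.mem_Ici.2 dist_nonneg) (Set.mem_Ici.2 hpos.le) (Metric.mem_ball.1 hy2).le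

theorem statement10
    {X : Type*} [MetricSpace X] [CompactSpace X] [MeasurableSpace X] [BorelSpace X]
    (r : X → X) (hr : Measurable r)
    (hfin : ∀ x : X, (r ⁻¹' {x}).Finite) (hne : ∀ x : X, (r ⁻¹' {x}).Nonempty)
    (ρ : Measure X) [IsProbabilityMeasure ρ]
    (hsi : ∀ f : X → ℝ, Measurable f → (∃ M : ℝ, ∀ x, |f x| ≤ M) →
      ∫ x, f x ∂ρ = ∫ x, (Nat.card (r ⁻¹' {x}) : ℝ)⁻¹ * ∑' y : r ⁻¹' {x}, f y.1 ∂ρ)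
    {p : ℕ} (hp : 0 < p) (xc : ZMod p → X) (hxc : Function.Injective xc)
    (hcyc : ∀ i : ZMod p, r (xc (i + 1)) = xc i)
    (lamC : Measure (Solenoid r))
    (hlam : ∀ F : Solenoid r → ℝ≥0∞, Measurable F →
      ∫⁻ z, F z ∂lamC = ∫⁻ x, ∑' ω : NC r xc x, F ω.1 ∂ρ)
    (α : ZMod p → ℂ) (hα : ∀ i, ‖α i‖ = 1)
    (ι : Solenoid r → ZMod p)
    (hι : ∀ x : X, ∀ ω ∈ NC r xc x,
      Tendsto (fun n : ℕ => ω.1 ((p : ℤ) * (n : ℤ))) atTop (𝓝 (xc (ι ω))))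
    (hrep : ∀ i : ZMod p, ∃ c δ : ℝ, 0 < c ∧ c < 1 ∧ 0 < δ ∧ ∀ x : X,
      0 < dist x (xc i) → dist x (xc i) < δ → c⁻¹ * dist x (xc i) < dist (r^[p] x) (xc i))
    (hrc : ∀ i : ZMod p, ContinuousAt r (xc i))
    (hcc : ∀ i : ZMod p, ∀ᶠ y in 𝓝 (xc i), Nat.card (r ⁻¹' {y}) = Nat.card (r ⁻¹' {xc i}))
    (m0 : X → ℂ) (hm0m : Measurable m0) (hm0b : ∃ M : ℝ, ∀ x, ‖m0 x‖ ≤ M)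
    (β : ℝ → ℝ) (hβmono : MonotoneOn β (Set.Ici 0)) (hβ0 : ∀ t : ℝ, 0 ≤ t → 0 ≤ β t)
    (hβsum : ∀ A : ℝ, 0 < A → ∀ c : ℝ, 0 < c → c < 1 →
      Summable fun k : ℕ => β (A * c ^ (k + 1)))
    (hβlip : ∀ i : ZMod p, ∀ᶠ y in 𝓝 (xc i), ‖m0 y - m0 (xc i)‖ ≤ β (dist y (xc i)))
    (hqmf : ∀ x : X,
      (Nat.card (r ⁻¹' {x}) : ℝ)⁻¹ * ∑' y : r ⁻¹' {x}, ‖m0 y.1‖ ^ 2 = 1)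
    (hlp : ∀ i : ZMod p, m0 (xc i) = α i * (Real.sqrt (Nat.card (r ⁻¹' {r (xc i)})) : ℂ))
    (P : X → Measure (Solenoid r))
    (hP : IsPathMeasureFamily r
      (fun y => ENNReal.ofReal (‖m0 y‖ ^ 2 / (Nat.card (r ⁻¹' {r y}) : ℝ))) P) :
    (∀ i : ZMod p, ‖m0 (xc i)‖ ^ 2 / (Nat.card (r ⁻¹' {r (xc i)}) : ℝ) = 1) ∧
    (∀ x : X, ∑' ω : NC r xc x, ENNReal.ofReal (‖scalingFn r α ι m0 ω.1‖ ^ 2)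
        = P x (NC r xc x)) ∧
    (∀ f : X → ℂ, Measurable f → (∃ M : ℝ, ∀ x, ‖f x‖ ≤ M) →
      ∫ z, f (z.1 0) * ((‖scalingFn r α ι m0 z‖ ^ 2 : ℝ) : ℂ) ∂lamC
        = ∫ x, f x * (((P x (NC r xc x)).toReal : ℝ) : ℂ) ∂ρ) := by
  have hN : ∀ x, (1 : ℝ) ≤ Nat.card (r ⁻¹' {x}) := by
    intro x
    have : Finite (r ⁻¹' {x}) := hfin x
    have : Nonempty (r ⁻¹' {x}) := (hne x).to_subtype
    exact_mod_cast Nat.card_pos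
  have part1 : ∀ i : ZMod p, ‖m0 (xc i)‖ ^ 2 / (Nat.card (r ⁻¹' {r (xc i)}) : ℝ) = 1 := by
    intro i
    have h1 := hN (r (xc i))
    rw [hlp i, norm_mul, hα, one_mul, Complex.norm_real,
      Real.norm_of_nonneg (Real.sqrt_nonneg _), Real.sq_sqrt (by positivity)]
    exact div_self (by linarith)
  have hccr : ∀ i : ZMod p, ∀ᶠ y in 𝓝 (xc i),
      Nat.card (r ⁻¹' {r y}) = Nat.card (r ⁻¹' {r (xc i)}) := by
    intro i
    have h1 : r (xc i) = xc (i - 1) := by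
      have := hcyc (i - 1)
      rwa [sub_add_cancel] at this
    have h2 := (hrc i).tendsto
    rw [h1] at h2 ⊢
    exact h2.eventually (hcc (i - 1))
  set w : X → ℝ := fun y => ‖m0 y‖ ^ 2 / (Nat.card (r ⁻¹' {r y}) : ℝ) with hw
  set W : X → ℝ≥0∞ := fun y => ENNReal.ofReal (w y) with hWdef
  have hwm : Measurable w :=
    (hm0m.norm.pow_const 2).div ((measurable_card_fiber r hr hfin).comp hr)
  have hWm : Measurable W := hwm.ennreal_ofReal
  -- `w > 1/2` near the cycle
  have hwnear : ∀ i : ZMod p, ∀ᶠ y in 𝓝 (xc i), 1 / 2 < w y := by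
    intro i
    have h1 := m0_tendsto (xc i) m0 β hβmono hβsum (hβlip i)
    have h2 : Tendsto (fun y => ‖m0 y‖ ^ 2 / (Nat.card (r ⁻¹' {r (xc i)}) : ℝ)) (𝓝 (xc i)) (𝓝 1) := by
      rw [← part1 i]
      exact (h1.norm.pow 2).div_const _
    filter_upwards [h2.eventually (lt_mem_nhds (show (1 / 2 : ℝ) < 1 by norm_num)), hccr i]
      with y hy hy2
    simp only [hw]
    rwa [hy2]
  have hwsum : ∀ x, ∑' y : r ⁻¹' {x}, w y.1 = 1 := by
    intro x
    rw [← hqmf x, ← tsum_mul_left]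
    refine tsum_congr fun y => ?_
    have : r y.1 = x := y.2
    simp only [hw, this]
    ring
  have hw0 : ∀ y, 0 ≤ w y := fun y => by positivity
  have hinj : Set.InjOn r {y | 1 / 2 < w y} := by
    intro a ha b hb hab
    by_contra hne'
    have : Finite (r ⁻¹' {r b}) := hfin (r b)
    have := Fintype.ofFinite (r ⁻¹' {r b})
    have h1 := hwsum (r b)
    rw [tsum_fintype] at h1
    have hA : (⟨a, hab⟩ : r ⁻¹' {r b}) ≠ ⟨b, rfl⟩ := fun h => hne' (congrArg Subtype.val h)
    have h2 := Finset.add_le_sum (fun (y : r ⁻¹' {r b}) _ => hw0 y.1) (Finset.mem_univ _)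
      (Finset.mem_univ _) hA
    rw [h1] at h2
    have ha' : 1 / 2 < w a := ha
    have hb' : 1 / 2 < w b := hb
    simp only at h2
    linarith
  have hcount : ∀ x, (NC r xc x).Countable := by
    intro x
    refine countable_of_injOn r hfin _ hinj x _ ?_
    intro z hz
    exact ⟨hz.1, path_asymp r hp xc hcyc hrc z _ (hι x z hz) (fun _ y => 1 / 2 < w y) hwnear⟩
  have hphi : ∀ x, ∀ z ∈ NC r xc x, Tendsto (fun n : ℕ => ∏ k ∈ Finset.range n,
      W (z.1 ((k : ℤ) + 1))) atTop (𝓝 (ENNReal.ofReal (‖scalingFn r α ι m0 z‖ ^ 2))) := by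
    intro x z hz
    exact phi_tendsto r hfin hne hp xc hcyc α hα ι hrep hrc hccr m0 β hβmono hβ0 hβsum hβlip hlp z
      (hι x z hz)
  have part2 : ∀ x : X, ∑' ω : NC r xc x, ENNReal.ofReal (‖scalingFn r α ι m0 ω.1‖ ^ 2)
        = P x (NC r xc x) := by
    intro x
    have h1 : P x (NC r xc x) = P x (⋃ z ∈ NC r xc x, {z}) := by rw [Set.biUnion_of_singleton]
    rw [h1, measure_biUnion (hcount x)]
    · refine tsum_congr fun ω => ?_
      exact tendsto_nhds_unique (hphi x ω.1 ω.2) (P_singleton r W P hP x ω.1 ω.2.1)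
    · intro a _ b _ hab
      simpa [Function.onFun] using hab
    · intro b _
      exact MeasurableSet.singleton b
  refine ⟨part1, part2, ?_⟩
  intro f hf _
  have hPm : Measurable P := P_measurable r hr hfin W hWm P hP
  let S : Set (Solenoid r) :=
    {z | ∃ i : ZMod p, Tendsto (fun n : ℕ => z.1 ((p : ℤ) * (n : ℤ))) atTop (𝓝 (xc i))}
  have : NeZero p := ⟨hp.ne'⟩
  have hS : MeasurableSet S := by
    have : S = ⋃ i : ZMod p,
        {z | Tendsto (fun n : ℕ => z.1 ((p : ℤ) * (n : ℤ))) atTop (𝓝 (xc i))} := by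
      ext z; simp [S]
    rw [this]
    refine MeasurableSet.iUnion fun i => ?_
    exact measurableSet_tendsto (𝓝 (xc i)) (fun n => sol_meas r _)
  have hNC : ∀ x, NC r xc x = {z | z.1 0 = x} ∩ S := fun x => rfl
  have hPh : ∀ x, P x (NC r xc x) = P x S := by
    intro x
    have := hP.1 x
    have hae : ∀ᵐ z ∂(P x), z.1 0 = x := by
      rw [ae_iff]
      exact (prob_compl_eq_zero_iff (sol_meas r 0 (MeasurableSet.singleton x))).2 (hP.2.1 x)
    apply measure_congr
    filter_upwards [hae] with z hz
    apply propext
    exact ⟨fun h => h.2, fun h => ⟨hz, h⟩⟩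
  have hhm : Measurable fun x => P x (NC r xc x) := by
    simp_rw [hPh]
    exact (Measure.measurable_coe hS).comp hPm
  let Φ : Solenoid r → ℝ≥0∞ := fun z =>
    liminf (fun n : ℕ => ∏ k ∈ Finset.range n, W (z.1 ((k : ℤ) + 1))) atTop
  have hΦm : Measurable Φ := by
    refine Measurable.liminf fun n => ?_
    exact Finset.measurable_prod _ fun k _ => hWm.comp (sol_meas r _)
  have hΦ : ∀ z ∈ S, Φ z = ENNReal.ofReal (‖scalingFn r α ι m0 z‖ ^ 2) := by
    intro z hz
    exact (hphi (z.1 0) z ⟨rfl, hz⟩).liminf_eq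
  have hSae : ∀ᵐ z ∂lamC, z ∈ S := by
    rw [ae_iff]
    show lamC Sᶜ = 0
    rw [← lintegral_indicator_one hS.compl, hlam _ (measurable_one.indicator hS.compl)]
    have : ∀ x, ∑' ω : NC r xc x, Sᶜ.indicator (1 : Solenoid r → ℝ≥0∞) ω.1 = 0 := by
      intro x
      rw [ENNReal.tsum_eq_zero]
      intro ω
      have hn : ω.1 ∉ Sᶜ := fun h => h ω.2.2
      exact Set.indicator_of_notMem hn _
    simp [this]
  have hmeq : (lamC.withDensity Φ).map (fun z => z.1 0)
      = ρ.withDensity (fun x => P x (NC r xc x)) := by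
    ext B hB
    have hB' : MeasurableSet ((fun z : Solenoid r => z.1 0) ⁻¹' B) := sol_meas r 0 hB
    rw [Measure.map_apply (sol_meas r 0) hB, withDensity_apply _ hB', withDensity_apply _ hB,
      ← lintegral_indicator hB', ← lintegral_indicator hB, hlam _ (hΦm.indicator hB')]
    refine lintegral_congr fun x => ?_
    by_cases hx : x ∈ B
    · rw [Set.indicator_of_mem hx, ← part2 x]
      refine tsum_congr fun ω => ?_
      rw [Set.indicator_of_mem, hΦ _ ω.2.2]
      show ω.1.1 0 ∈ B
      rw [ω.2.1]; exact hx
    · rw [Set.indicator_of_notMem hx, ENNReal.tsum_eq_zero]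
      intro ω
      rw [Set.indicator_of_notMem]
      intro h
      apply hx
      have h' : ω.1.1 0 ∈ B := h
      rwa [ω.2.1] at h'
  have hL : ∫ z, f (z.1 0) * ((‖scalingFn r α ι m0 z‖ ^ 2 : ℝ) : ℂ) ∂lamC
      = ∫ z, f (z.1 0) ∂(lamC.withDensity Φ) := by
    rw [integral_withDensity_eq_integral_toReal_smul hΦm]
    · refine integral_congr_ae ?_
      filter_upwards [hSae] with z hz
      rw [hΦ z hz, ENNReal.toReal_ofReal (by positivity), Complex.real_smul, mul_comm]
    · filter_upwards [hSae] with z hz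
      rw [hΦ z hz]
      exact ENNReal.ofReal_lt_top
  have hR : ∫ x, f x * (((P x (NC r xc x)).toReal : ℝ) : ℂ) ∂ρ
      = ∫ x, f x ∂(ρ.withDensity (fun x => P x (NC r xc x))) := by
    rw [integral_withDensity_eq_integral_toReal_smul hhm]
    · refine integral_congr_ae (Eventually.of_forall fun x => ?_)
      simp only [Complex.real_smul, mul_comm]
    · refine Eventually.of_forall fun x => ?_
      have := hP.1 x
      exact measure_lt_top _ _
  rw [hL, hR, ← hmeq, integral_map (sol_meas r 0).aemeasurable hf.aestronglyMeasurable]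
end
end

section
/- Under the hypotheses of the scaling-function theorem (C repelling; r and #r⁻¹ continuous at the points of C; m_0 β-Lipschitz at the points of C satisfying the quadrature and low-pass conditions), set V_0 = closure in L²(X_∞, λ_C) of {π(f)φ̂ : f ∈ L^∞(X, ρ)} and V_n = U^{-n} V_0 for n ∈ ℤ. Then V_n ⊂ V_{n+1} for all n ∈ ℤ, and the closure of ⋃_{n∈ℤ} V_n equals L²(X_∞, λ_C). -/
open MeasureTheory Filter Topology ENNReal

noncomputable section

structure HypT {X : Type*} [MetricSpace X] (r : X → X) {p : ℕ} (xc : ZMod p → X)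
    (α : ZMod p → ℂ) (m0 : X → ℂ) (β : ℝ → ℝ) : Prop where
  hfin : ∀ x : X, (r ⁻¹' {x}).Finite
  hne : ∀ x : X, (r ⁻¹' {x}).Nonempty
  hp : 0 < p
  hxc : Function.Injective xc
  hcyc : ∀ i : ZMod p, r (xc (i + 1)) = xc i
  hα : ∀ i, ‖α i‖ = 1
  hrep : ∀ i : ZMod p, ∃ c δ : ℝ, 0 < c ∧ c < 1 ∧ 0 < δ ∧ ∀ x : X,
      0 < dist x (xc i) → dist x (xc i) < δ → c⁻¹ * dist x (xc i) < dist (r^[p] x) (xc i)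
  hrc : ∀ i : ZMod p, ContinuousAt r (xc i)
  hcc : ∀ i : ZMod p, ∀ᶠ y in 𝓝 (xc i), Nat.card (r ⁻¹' {y}) = Nat.card (r ⁻¹' {xc i})
  hβmono : MonotoneOn β (Set.Ici 0)
  hβ0 : ∀ t : ℝ, 0 ≤ t → 0 ≤ β t
  hβsum : ∀ A : ℝ, 0 < A → ∀ c : ℝ, 0 < c → c < 1 →
      Summable fun k : ℕ => β (A * c ^ (k + 1))
  hβlip : ∀ i : ZMod p, ∀ᶠ y in 𝓝 (xc i), ‖m0 y - m0 (xc i)‖ ≤ β (dist y (xc i))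
  hqmf : ∀ x : X,
      (Nat.card (r ⁻¹' {x}) : ℝ)⁻¹ * ∑' y : r ⁻¹' {x}, ‖m0 y.1‖ ^ 2 = 1
  hlp : ∀ i : ZMod p, m0 (xc i) = α i * (Real.sqrt (Nat.card (r ⁻¹' {r (xc i)})) : ℂ)

def LimAt {X : Type*} [TopologicalSpace X] {r : X → X} {p : ℕ} (xc : ZMod p → X)
    (z : Solenoid r) (i : ZMod p) : Prop :=
  Tendsto (fun n : ℕ => z.1 ((p : ℤ) * (n : ℤ))) atTop (𝓝 (xc i))

def Conv {X : Type*} [MetricSpace X] {r : X → X} {p : ℕ} (xc : ZMod p → X)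
    (z : Solenoid r) (i : ZMod p) : Prop :=
  Tendsto (fun n : ℕ => dist (z.1 (n : ℤ)) (xc (i + (n : ZMod p)))) atTop (𝓝 0)

def fac {X : Type*} (r : X → X) {p : ℕ} (α : ZMod p → ℂ)
    (m0 : X → ℂ) (z : Solenoid r) (i : ZMod p) (k : ℕ) : ℂ :=
  (α (i + ((k + 1 : ℕ) : ZMod p)))⁻¹ * m0 (z.1 ((k : ℤ) + 1)) /
    (Real.sqrt (Nat.card (r ⁻¹' {r (z.1 ((k : ℤ) + 1))})) : ℂ)

section topo
set_option linter.unusedSectionVars false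
variable {X : Type*} [MetricSpace X] {r : X → X} {p : ℕ} {xc : ZMod p → X}
    {α : ZMod p → ℂ} {m0 : X → ℂ} {β : ℝ → ℝ}

theorem conv_of_lim (H : HypT r xc α m0 β) {z : Solenoid r} {i : ZMod p} (h : LimAt xc z i) :
    Conv xc z i := by
  have h1 : ∀ j : ℕ, Tendsto (fun n : ℕ => z.1 ((p : ℤ) * (n : ℤ) - j)) atTop
      (𝓝 (xc (i - (j : ZMod p)))) := by
    intro j
    induction j with
    | zero => simpa [LimAt] using h
    | succ j ih =>
      have h2 : r (xc (i - (j : ZMod p))) = xc (i - ((j + 1 : ℕ) : ZMod p)) := by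
        rw [← H.hcyc (i - ((j + 1 : ℕ) : ZMod p))]; congr 2; push_cast; ring
      have h3 := (H.hrc (i - (j : ZMod p))).tendsto.comp ih
      rw [h2] at h3
      refine h3.congr (fun n => ?_)
      have := z.2 ((p : ℤ) * (n : ℤ) - ((j + 1 : ℕ) : ℤ))
      rw [← this]
      have e : (p : ℤ) * (n : ℤ) - ((j + 1 : ℕ) : ℤ) + 1 = (p : ℤ) * (n : ℤ) - j := by
        push_cast; ring
      rw [e]
      rfl
  rw [Conv, Metric.tendsto_atTop]
  intro ε hε
  have h2 : ∀ᶠ n : ℕ in atTop, ∀ j ∈ Finset.range (p + 1),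
      dist (z.1 ((p : ℤ) * (n : ℤ) - j)) (xc (i - (j : ZMod p))) < ε := by
    rw [Filter.eventually_all_finset]
    intro j _
    exact (Metric.tendsto_nhds.1 (h1 j)) ε hε
  obtain ⟨n1, hn1⟩ := eventually_atTop.1 h2
  refine ⟨p * n1, fun k hk => ?_⟩
  have hp := H.hp
  have hdm := Nat.div_add_mod k p
  have hml := Nat.mod_lt k hp
  have hn : n1 ≤ k / p + 1 := by
    have : n1 ≤ k / p := by rw [Nat.le_div_iff_mul_le hp]; linarith [mul_comm p n1]
    omega
  have hj : p - k % p ∈ Finset.range (p + 1) := by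
    rw [Finset.mem_range]; omega
  have h4 := hn1 (k / p + 1) hn (p - k % p) hj
  have h5 : (p : ℤ) * ((k / p + 1 : ℕ) : ℤ) - ((p - k % p : ℕ) : ℤ) = k := by
    rw [Nat.cast_sub hml.le]
    have : ((p * (k / p) + k % p : ℕ) : ℤ) = k := by rw [hdm]
    push_cast at this ⊢
    linarith
  have h6 : i - ((p - k % p : ℕ) : ZMod p) = i + (k : ZMod p) := by
    rw [Nat.cast_sub hml.le]
    simp
  rw [h5, h6] at h4
  rw [Real.dist_0_eq_abs, abs_of_nonneg dist_nonneg]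
  exact h4

theorem lim_of_conv (H : HypT r xc α m0 β) {z : Solenoid r} {i : ZMod p} (h : Conv xc z i) :
    LimAt xc z i := by
  rw [LimAt, tendsto_iff_dist_tendsto_zero]
  have h1 : Tendsto (fun n : ℕ => p * n) atTop atTop :=
    tendsto_id.const_mul_atTop' H.hp
  have := h.comp h1
  refine this.congr (fun n => ?_)
  simp [Function.comp]

theorem conv_unique (H : HypT r xc α m0 β) {z : Solenoid r} {i j : ZMod p} (h : Conv xc z i)
    (h' : Conv xc z j) : i = j :=
  H.hxc (tendsto_nhds_unique (lim_of_conv H h) (lim_of_conv H h'))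

theorem conv_shift {z : Solenoid r} {i : ZMod p} (h : Conv xc z i) :
    Conv xc (shiftHat r z) (i - 1) := by
  rw [Conv, ← tendsto_add_atTop_iff_nat 1]
  refine h.congr (fun n => ?_)
  simp only [shiftHat]
  have e1 : ((n + 1 : ℕ) : ℤ) - 1 = n := by push_cast; ring
  have e2 : i - 1 + ((n + 1 : ℕ) : ZMod p) = i + n := by push_cast; ring
  rw [e1, e2]

theorem conv_shiftInv {z : Solenoid r} {i : ZMod p} (h : Conv xc z i) :
    Conv xc (shiftHatInv r z) (i + 1) := by
  have := (tendsto_add_atTop_iff_nat 1).2 h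
  refine this.congr (fun n => ?_)
  simp only [shiftHatInv]
  have e2 : i + 1 + (n : ZMod p) = i + ((n + 1 : ℕ) : ZMod p) := by push_cast; ring
  rw [e2]
  rfl

theorem iter_apply (z : Solenoid r) (n : ℕ) (k : ℤ) : r^[n] (z.1 (k + n)) = z.1 k := by
  induction n with
  | zero => simp
  | succ n ih =>
    rw [Function.iterate_succ_apply]
    have := z.2 (k + n)
    rw [show k + ((n + 1 : ℕ) : ℤ) = k + n + 1 by push_cast; ring, this, ih]

theorem cardpos (H : HypT r xc α m0 β) (x : X) : 1 ≤ Nat.card (r ⁻¹' {x}) := by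
  have := (H.hfin x).to_subtype
  have := (H.hne x).to_subtype
  exact Nat.card_pos

theorem uniform_rep [NeZero p] (H : HypT r xc α m0 β) : ∃ c δ : ℝ, 0 < c ∧ c < 1 ∧ 0 < δ ∧
    ∀ i, ∀ x : X, dist x (xc i) < δ → dist x (xc i) ≤ c * dist (r^[p] x) (xc i) := by
  choose c δ h1 h2 h3 h4 using H.hrep
  obtain ⟨i0, hi0⟩ := Finite.exists_max c
  obtain ⟨i1, hi1⟩ := Finite.exists_min δ
  refine ⟨c i0, δ i1, h1 _, h2 _, h3 _, fun i x hx => ?_⟩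
  rcases (dist_nonneg (x := x) (y := xc i)).eq_or_lt with h | h
  · rw [← h]; exact mul_nonneg (h1 _).le dist_nonneg
  · have := h4 i x h (hx.trans_le (hi1 i))
    rw [inv_mul_lt_iff₀ (h1 i)] at this
    exact this.le.trans (mul_le_mul_of_nonneg_right (hi0 i) dist_nonneg)

theorem summable_beta_s11 [NeZero p] (H : HypT r xc α m0 β) {z : Solenoid r} {i : ZMod p}
    (h : Conv xc z i) :
    Summable (fun k : ℕ => β (dist (z.1 (k : ℤ)) (xc (i + (k : ZMod p))))) := by
  obtain ⟨c, δ, hc0, hc1, hδ, hrep⟩ := uniform_rep H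
  obtain ⟨k0, hk0⟩ := (Metric.tendsto_atTop.1 h) (min δ 1) (lt_min hδ one_pos)
  set d : ℕ → ℝ := fun k => dist (z.1 (k : ℤ)) (xc (i + (k : ZMod p))) with hd
  have hdlt : ∀ k ≥ k0, d k < min δ 1 := by
    intro k hk
    have := hk0 k hk
    rwa [Real.dist_0_eq_abs, abs_of_nonneg dist_nonneg] at this
  have hstep : ∀ k ≥ k0, d (k + p) ≤ c * d k := by
    intro k hk
    have h1 := hrep (i + ((k + p : ℕ) : ZMod p)) (z.1 ((k + p : ℕ) : ℤ))
      ((hdlt (k + p) (by omega)).trans_le (min_le_left _ _))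
    have h2 := iter_apply z p k
    have h3 : (i + ((k + p : ℕ) : ZMod p)) = i + (k : ZMod p) := by simp
    have h4 : ((k + p : ℕ) : ℤ) = (k : ℤ) + p := by push_cast; ring
    rw [h4, h2] at h1
    simp only [hd]
    rw [h4]
    refine h1.trans (le_of_eq ?_)
    rw [h3]
  set c' : ℝ := c ^ ((p : ℝ)⁻¹) with hc'
  have hp0 : p ≠ 0 := H.hp.ne'
  have hc'0 : 0 < c' := Real.rpow_pos_of_pos hc0 _
  have hc'1 : c' < 1 := Real.rpow_lt_one hc0.le hc1 (by positivity)
  have hc'p : c' ^ p = c := Real.rpow_inv_natCast_pow hc0.le hp0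
  have hbound : ∀ k : ℕ, d (k0 + k) ≤ (c' ^ p)⁻¹ * c' ^ (k + 1) := by
    intro k
    induction k using Nat.strong_induction_on with
    | _ k ih =>
      by_cases hk : k < p
      · have h1 : d (k0 + k) ≤ 1 := ((hdlt _ (by omega)).trans_le (min_le_right _ _)).le
        refine h1.trans ?_
        rw [inv_mul_eq_div, one_le_div (by positivity)]
        exact pow_le_pow_of_le_one hc'0.le hc'1.le (by omega)
      · obtain ⟨m, rfl⟩ : ∃ m, k = m + p := ⟨k - p, by omega⟩
        have h1 := ih m (by have := H.hp; omega)
        have h2 := hstep (k0 + m) (by omega)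
        rw [← add_assoc]
        refine h2.trans ?_
        calc c * d (k0 + m) ≤ c * ((c' ^ p)⁻¹ * c' ^ (m + 1)) :=
              mul_le_mul_of_nonneg_left h1 hc0.le
          _ = (c' ^ p)⁻¹ * c' ^ (m + p + 1) := by rw [← hc'p]; ring
  rw [← summable_nat_add_iff k0]
  have hA : 0 < (c' ^ p)⁻¹ := by positivity
  refine Summable.of_nonneg_of_le (fun k => H.hβ0 _ dist_nonneg) (fun k => ?_)
    (H.hβsum _ hA c' hc'0 hc'1)
  apply H.hβmono dist_nonneg (Set.mem_Ici.2 (by positivity))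
  have := hbound k
  rw [add_comm k k0]
  exact this

theorem m0_cont (H : HypT r xc α m0 β) (i : ZMod p) : ContinuousAt m0 (xc i) := by
  have h1 := (H.hβsum 1 one_pos (1/2) (by norm_num) (by norm_num)).tendsto_atTop_zero
  rw [Metric.continuousAt_iff']
  intro ε hε
  obtain ⟨k, hk⟩ := ((tendsto_order.1 h1).2 ε hε).exists
  filter_upwards [H.hβlip i, Metric.ball_mem_nhds (xc i)
    (show (0 : ℝ) < 1 * (1/2) ^ (k+1) by positivity)] with y hy hy2
  rw [dist_eq_norm]
  refine hy.trans_lt (lt_of_le_of_lt ?_ hk)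
  exact H.hβmono dist_nonneg (Set.mem_Ici.2 (by positivity)) (Metric.mem_ball.1 hy2).le

theorem card_r (H : HypT r xc α m0 β) (i : ZMod p) :
    ∀ᶠ y in 𝓝 (xc i), Nat.card (r ⁻¹' {r y}) = Nat.card (r ⁻¹' {r (xc i)}) := by
  have h1 : r (xc i) = xc (i - 1) := by rw [← H.hcyc (i-1)]; simp
  have h2 := (H.hrc i).tendsto
  rw [h1] at h2 ⊢
  exact h2.eventually (H.hcc (i - 1))

theorem qmf_sum (H : HypT r xc α m0 β) (x : X) (T : Finset X) (hT : ∀ y ∈ T, r y = x) :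
    ∑ y ∈ T, ‖m0 y‖ ^ 2 ≤ Nat.card (r ⁻¹' {x}) := by
  have h := H.hqmf x
  have hN : (0 : ℝ) < Nat.card (r ⁻¹' {x}) := by exact_mod_cast cardpos H x
  rw [inv_mul_eq_one₀ hN.ne'] at h
  rw [h]
  have := (H.hfin x).to_subtype
  have hfi : Fintype (r ⁻¹' {x}) := Fintype.ofFinite _
  rw [tsum_fintype, ← Finset.sum_coe_sort T]
  have := Finset.sum_map (Finset.univ : Finset T)
    (⟨fun y => (⟨y.1, hT y.1 y.2⟩ : r ⁻¹' {x}), fun a b hab => by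
      exact Subtype.ext (congrArg (fun t : r ⁻¹' {x} => t.1) hab)⟩ : T ↪ (r ⁻¹' {x})) (fun y => ‖m0 y.1‖ ^ 2)
  refine (le_of_eq this.symm).trans ?_
  exact Finset.sum_le_sum_of_subset_of_nonneg (Finset.subset_univ _) (fun _ _ _ => by positivity)

theorem loc_inj (H : HypT r xc α m0 β) (i : ZMod p) :
    ∃ η > 0, Set.InjOn r (Metric.ball (xc i) η) := by
  set N : ℝ := (Nat.card (r ⁻¹' {r (xc i)}) : ℝ) with hN
  have hN1 : (0 : ℝ) < N := by rw [hN]; exact_mod_cast cardpos H _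
  have h1 : ‖m0 (xc i)‖ ^ 2 = N := by
    rw [H.hlp, norm_mul, H.hα, one_mul, Complex.norm_real, Real.norm_eq_abs, sq_abs,
      Real.sq_sqrt hN1.le]
  have h2 : ContinuousAt (fun y => ‖m0 y‖ ^ 2) (xc i) := (m0_cont H i).norm.pow 2
  have h3 : ∀ᶠ y in 𝓝 (xc i), N / 2 < ‖m0 y‖ ^ 2 := by
    apply h2.eventually_const_lt
    show N / 2 < ‖m0 (xc i)‖ ^ 2
    rw [h1]; linarith
  obtain ⟨η, hη, hb⟩ := Metric.eventually_nhds_iff_ball.1 (h3.and (card_r H i))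
  refine ⟨η, hη, fun y hy y' hy' hyy => ?_⟩
  by_contra hne
  classical
  have h4 := qmf_sum H (r y) {y, y'} (by simp [hyy])
  rw [Finset.sum_pair hne, (hb y hy).2, ← hN] at h4
  linarith [(hb y hy).1, (hb y' hy').1]

theorem exists_eta [NeZero p] (H : HypT r xc α m0 β) : ∃ η > 0,
    (∀ i, Set.InjOn r (Metric.ball (xc i) η)) ∧
    (∀ i j x, dist x (xc i) < η → dist x (xc j) < η → i = j) := by
  choose η hη hinj using loc_inj H
  obtain ⟨i0, hi0⟩ := Finite.exists_min η
  obtain ⟨q0, hq0⟩ := Finite.exists_min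
    (fun q : ZMod p × ZMod p => if q.1 = q.2 then (1 : ℝ) else dist (xc q.1) (xc q.2))
  set e : ℝ := if q0.1 = q0.2 then (1 : ℝ) else dist (xc q0.1) (xc q0.2) with he
  have he0 : 0 < e := by
    rw [he]; split_ifs with h
    · exact one_pos
    · exact dist_pos.2 (fun hh => h (H.hxc hh))
  refine ⟨min (η i0) (e / 2), lt_min (hη _) (by linarith), fun i => ?_, fun i j x hi hj => ?_⟩
  · exact (hinj i).mono (Metric.ball_subset_ball ((min_le_left _ _).trans (hi0 i)))
  · by_contra hne
    have h1 := hq0 (i, j)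
    simp only [hne, if_false] at h1
    have h2 := dist_triangle_left (xc i) (xc j) x
    have h3 := hi.trans_le (min_le_right _ _)
    have h4 := hj.trans_le (min_le_right _ _)
    change e ≤ _ at h1
    linarith

theorem fac_summable [NeZero p] (H : HypT r xc α m0 β) {z : Solenoid r} {i : ZMod p}
    (h : Conv xc z i) : Summable (fun k => ‖fac r α m0 z i k - 1‖) := by
  have hs := (summable_nat_add_iff 1).2 (summable_beta_s11 H h)
  have h1 : ∀ᶠ k : ℕ in atTop, ‖fac r α m0 z i k - 1‖ ≤
      β (dist (z.1 ((k + 1 : ℕ) : ℤ)) (xc (i + ((k + 1 : ℕ) : ZMod p)))) := by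
    have hall : ∀ j : ZMod p, ∀ᶠ y in 𝓝 (xc j), ‖m0 y - m0 (xc j)‖ ≤ β (dist y (xc j)) ∧
      Nat.card (r ⁻¹' {r y}) = Nat.card (r ⁻¹' {r (xc j)}) := fun j =>
        (H.hβlip j).and (card_r H j)
    simp only [Metric.eventually_nhds_iff] at hall
    choose e he hall using hall
    obtain ⟨i0, hi0⟩ := Finite.exists_min e
    have h2 := (tendsto_order.1 ((tendsto_add_atTop_iff_nat 1).2 h)).2 (e i0) (he i0)
    filter_upwards [h2] with k hk
    set j := i + ((k + 1 : ℕ) : ZMod p) with hj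
    obtain ⟨h3, h4⟩ := hall j (hk.trans_le (hi0 j))
    refine le_trans ?_ h3
    have hz : z.1 ((k + 1 : ℕ) : ℤ) = z.1 ((k : ℤ) + 1) := by push_cast; rfl
    rw [hz] at h3 h4 ⊢
    rw [fac, h4, ← hj]
    set N := Nat.card (r ⁻¹' {r (xc j)}) with hN
    have hN1 : (1 : ℝ) ≤ N := by exact_mod_cast cardpos H _
    have hs1 : 1 ≤ Real.sqrt N := Real.one_le_sqrt.2 hN1
    have hsne : (Real.sqrt N : ℂ) ≠ 0 := by
      exact_mod_cast (by linarith : Real.sqrt N ≠ 0)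
    have hαne : α j ≠ 0 := by
      intro h0; have := H.hα j; rw [h0] at this; simp at this
    have h5 : (α j)⁻¹ * m0 (z.1 ((k : ℤ) + 1)) / (Real.sqrt N : ℂ) - 1 =
        (α j)⁻¹ * (m0 (z.1 ((k : ℤ) + 1)) - m0 (xc j)) / (Real.sqrt N : ℂ) := by
      rw [H.hlp j, ← hN]; field_simp
    rw [h5, norm_div, norm_mul, norm_inv, H.hα, inv_one, one_mul, Complex.norm_real,
      Real.norm_eq_abs, abs_of_nonneg (by linarith)]
    exact div_le_self (norm_nonneg _) hs1
  refine Summable.of_norm_bounded_eventually_nat hs ?_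
  simpa using h1

theorem fac_mult [NeZero p] (H : HypT r xc α m0 β) {z : Solenoid r} {i : ZMod p}
    (h : Conv xc z i) : Multipliable (fac r α m0 z i) := by
  have := multipliable_one_add_of_summable (fac_summable H h)
  simpa using this

theorem fac_tail [NeZero p] (H : HypT r xc α m0 β) {z : Solenoid r} {i : ZMod p}
    (h : Conv xc z i) : ‖∏' k, fac r α m0 z i k - 1‖ ≤
      Real.exp (∑' k, ‖fac r α m0 z i k - 1‖) - 1 := by
  have h1 := (fac_mult H h).hasProd.tendsto_prod_nat
  have h2 := (h1.sub_const 1).norm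
  refine le_of_tendsto' h2 (fun n => ?_)
  have h3 := Finset.norm_prod_one_add_sub_one_le (Finset.range n)
    (fun k => fac r α m0 z i k - 1)
  simp only [add_sub_cancel] at h3
  refine h3.trans ?_
  gcongr
  exact (fac_summable H h).sum_le_tsum _ (fun _ _ => norm_nonneg _)

theorem fac_shift (z : Solenoid r) (i : ZMod p) (k : ℕ) :
    fac r α m0 (shiftHat r z) (i - 1) (k + 1) = fac r α m0 z i k := by
  simp only [fac, shiftHat]
  have e1 : ((k + 1 : ℕ) : ℤ) + 1 - 1 = (k : ℤ) + 1 := by push_cast; ring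
  have e2 : i - 1 + ((k + 1 + 1 : ℕ) : ZMod p) = i + ((k + 1 : ℕ) : ZMod p) := by
    push_cast; ring
  rw [e1, e2]

theorem shiftInv_iter (z : Solenoid r) (n : ℕ) (k : ℤ) :
    ((shiftHatInv r)^[n] z).1 k = z.1 (k + n) := by
  induction n generalizing k with
  | zero => simp
  | succ n ih =>
    rw [Function.iterate_succ_apply']
    simp only [shiftHatInv]
    rw [ih, show k + 1 + (n : ℤ) = k + ((n + 1 : ℕ) : ℤ) by push_cast; ring]

theorem shift_iter (z : Solenoid r) (n : ℕ) (k : ℤ) :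
    ((shiftHat r)^[n] z).1 k = z.1 (k - n) := by
  induction n generalizing k with
  | zero => simp
  | succ n ih =>
    rw [Function.iterate_succ_apply']
    simp only [shiftHat]
    rw [ih, show k - 1 - (n : ℤ) = k - ((n + 1 : ℕ) : ℤ) by push_cast; ring]

theorem conv_shiftInv_iter {z : Solenoid r} {i : ZMod p} (h : Conv xc z i) (n : ℕ) :
    Conv xc ((shiftHatInv r)^[n] z) (i + n) := by
  induction n with
  | zero => simpa using h
  | succ n ih =>
    rw [Function.iterate_succ_apply']
    have := conv_shiftInv ih
    rwa [show i + ((n + 1 : ℕ) : ZMod p) = i + n + 1 by push_cast; ring]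

theorem fac_shiftInv_iter (z : Solenoid r) (i : ZMod p) (n k : ℕ) :
    fac r α m0 ((shiftHatInv r)^[n] z) (i + n) k = fac r α m0 z i (k + n) := by
  simp only [fac, shiftInv_iter]
  have e1 : (k : ℤ) + 1 + n = ((k + n : ℕ) : ℤ) + 1 := by push_cast; ring
  have e2 : i + n + ((k + 1 : ℕ) : ZMod p) = i + ((k + n + 1 : ℕ) : ZMod p) := by push_cast; ring
  rw [e1, e2]

theorem tail_tendsto [NeZero p] (H : HypT r xc α m0 β) {z : Solenoid r} {i : ZMod p}
    (h : Conv xc z i) : Tendsto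
      (fun n : ℕ => ∏' k, fac r α m0 ((shiftHatInv r)^[n] z) (i + n) k) atTop (𝓝 1) := by
  rw [tendsto_iff_norm_sub_tendsto_zero]
  have h1 := tendsto_sum_nat_add (fun k => ‖fac r α m0 z i k - 1‖)
  have h2 : Tendsto (fun n : ℕ => Real.exp (∑' k, ‖fac r α m0 z i (k + n) - 1‖) - 1) atTop
      (𝓝 0) := by
    have := (Real.continuous_exp.tendsto 0).comp h1
    have := this.sub_const 1
    simpa using this
  refine squeeze_zero (fun n => norm_nonneg _) (fun n => ?_) h2
  have := fac_tail H (conv_shiftInv_iter h n)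
  refine this.trans (le_of_eq ?_)
  congr 2
  apply tsum_congr
  intro k
  rw [fac_shiftInv_iter]

theorem tprod_shift [NeZero p] (H : HypT r xc α m0 β) {z : Solenoid r} {i : ZMod p}
    (h : Conv xc z i) : ∏' k, fac r α m0 (shiftHat r z) (i - 1) k =
      ((α i)⁻¹ * m0 (z.1 0) / (Real.sqrt (Nat.card (r ⁻¹' {r (z.1 0)})) : ℂ)) *
      ∏' k, fac r α m0 z i k := by
  have h1 := (fac_mult H (conv_shift h)).hasProd.tendsto_prod_nat
  have h2 := (fac_mult H h).hasProd.tendsto_prod_nat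
  have h3 := (tendsto_add_atTop_iff_nat 1).2 h1
  have h4 := h2.const_mul
    ((α i)⁻¹ * m0 (z.1 0) / (Real.sqrt (Nat.card (r ⁻¹' {r (z.1 0)})) : ℂ))
  refine tendsto_nhds_unique h3 (h4.congr (fun n => ?_))
  rw [Finset.prod_range_succ', mul_comm]
  congr 1
  · apply Finset.prod_congr rfl
    intro k _
    rw [fac_shift]
  · simp [fac, shiftHat]

/-- finite level quadrature -/
theorem quad_fin (H : HypT r xc α m0 β) (n : ℕ) (x : X) (T : Finset X)
    (hT : ∀ y ∈ T, r^[n] y = x) :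
    ∑ y ∈ T, ∏ j ∈ Finset.range n,
      (‖m0 (r^[j] y)‖ ^ 2 / (Nat.card (r ⁻¹' {r (r^[j] y)}) : ℝ)) ≤ 1 := by
  classical
  induction n generalizing T with
  | zero =>
    simp only [Finset.range_zero, Finset.prod_empty, Finset.sum_const, nsmul_eq_mul, mul_one]
    have : T ⊆ {x} := fun y hy => by simpa using hT y hy
    have := Finset.card_le_card this
    simpa using this
  | succ n ih =>
    have h1 := ih (T.image r) (by
      intro y hy
      obtain ⟨w, hw, rfl⟩ := Finset.mem_image.1 hy
      simpa using hT w hw)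
    refine le_trans ?_ h1
    rw [← Finset.sum_fiberwise_of_maps_to (t := T.image r) (g := r)
      (fun y hy => Finset.mem_image_of_mem r hy)]
    refine Finset.sum_le_sum (fun w _ => ?_)
    have h2 := qmf_sum H w (T.filter (fun y => r y = w)) (by simp)
    have hN : (0 : ℝ) < Nat.card (r ⁻¹' {w}) := by exact_mod_cast cardpos H w
    have h3 : ∀ y ∈ T.filter (fun y => r y = w), ∏ j ∈ Finset.range (n + 1),
        (‖m0 (r^[j] y)‖ ^ 2 / (Nat.card (r ⁻¹' {r (r^[j] y)}) : ℝ)) =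
        (∏ j ∈ Finset.range n,
          (‖m0 (r^[j] w)‖ ^ 2 / (Nat.card (r ⁻¹' {r (r^[j] w)}) : ℝ))) *
          (‖m0 y‖ ^ 2 / (Nat.card (r ⁻¹' {w}) : ℝ)) := by
      intro y hy
      have hyw := (Finset.mem_filter.1 hy).2
      rw [Finset.prod_range_succ']
      simp only [Function.iterate_succ_apply, hyw, Function.iterate_zero, id]
    rw [Finset.sum_congr rfl h3, ← Finset.mul_sum, ← Finset.sum_div]
    apply mul_le_of_le_one_right
    · exact Finset.prod_nonneg (fun _ _ => by positivity)
    · rw [div_le_one hN]; exact h2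

theorem sum_tprod_le [NeZero p] (H : HypT r xc α m0 β) (x : X) (T : Finset (Solenoid r))
    (i : Solenoid r → ZMod p)
    (hT : ∀ z ∈ T, z.1 0 = x ∧ Conv xc z (i z)) :
    ∑ z ∈ T, ‖∏' k, fac r α m0 z (i z) k‖ ^ 2 ≤ 1 := by
  classical
  have h1 : Tendsto (fun n : ℕ => ∑ z ∈ T, ‖∏ k ∈ Finset.range n, fac r α m0 z (i z) k‖ ^ 2)
      atTop (𝓝 (∑ z ∈ T, ‖∏' k, fac r α m0 z (i z) k‖ ^ 2)) := by
    refine tendsto_finsetSum _ (fun z hz => ?_)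
    exact ((fac_mult H (hT z hz).2).hasProd.tendsto_prod_nat.norm.pow 2)
  have hsep : ∀ᶠ n : ℕ in atTop, ∀ z ∈ T, ∀ w ∈ T, z.1 n = w.1 n → z = w := by
    rw [Filter.eventually_all_finset]; intro z _
    rw [Filter.eventually_all_finset]; intro w _
    by_cases hzw : z = w
    · simp [hzw]
    · have : ∃ k : ℤ, z.1 k ≠ w.1 k := by
        by_contra hcon
        push Not at hcon
        exact hzw (Subtype.ext (funext hcon))
      obtain ⟨k, hk⟩ := this
      filter_upwards [eventually_ge_atTop k.toNat] with n hn heq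
      exfalso
      apply hk
      have h3 : (k + ((n - k).toNat : ℤ)) = n := by omega
      rw [← iter_apply z (n - k).toNat k, ← iter_apply w (n - k).toNat k, h3, heq]
  refine le_of_tendsto h1 ?_
  filter_upwards [hsep] with n hn
  have h2 := quad_fin H n x (T.image (fun z => z.1 (n : ℤ))) (by
    intro y hy
    obtain ⟨z, hz, rfl⟩ := Finset.mem_image.1 hy
    have := iter_apply z n 0
    rw [zero_add] at this
    rw [this, (hT z hz).1])
  rw [Finset.sum_image (fun z hz w hw h => hn z hz w hw h)] at h2
  refine le_trans (le_of_eq ?_) h2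
  refine Finset.sum_congr rfl (fun z hz => ?_)
  rw [norm_prod, ← Finset.prod_pow, ← Finset.prod_range_reflect]
  refine Finset.prod_congr rfl (fun j hj => ?_)
  have hj' := Finset.mem_range.1 hj
  have h4 : r^[j] (z.1 (n : ℤ)) = z.1 (((n - 1 - j : ℕ) : ℤ) + 1) := by
    have := iter_apply z j (((n - 1 - j : ℕ) : ℤ) + 1)
    rw [← this, show ((n - 1 - j : ℕ) : ℤ) + 1 + (j : ℤ) = n by omega]
  rw [h4, fac, norm_div, norm_mul, norm_inv, H.hα, inv_one, one_mul, Complex.norm_real,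
    Real.norm_eq_abs, div_pow, sq_abs, Real.sq_sqrt (by positivity)]

end topo

structure HypM {X : Type*} [MetricSpace X] [MeasurableSpace X] (r : X → X) {p : ℕ}
    (xc : ZMod p → X) (ρ : Measure X) (lamC : Measure (Solenoid r)) : Prop where
  hr : Measurable r
  hsi : ∀ f : X → ℝ, Measurable f → (∃ M : ℝ, ∀ x, |f x| ≤ M) →
      ∫ x, f x ∂ρ = ∫ x, (Nat.card (r ⁻¹' {x}) : ℝ)⁻¹ * ∑' y : r ⁻¹' {x}, f y.1 ∂ρ
  hlam : ∀ F : Solenoid r → ℝ≥0∞, Measurable F →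
      ∫⁻ z, F z ∂lamC = ∫⁻ x, ∑' ω : NC r xc x, F ω.1 ∂ρ

def Y0 {X : Type*} [MetricSpace X] (r : X → X) {p : ℕ} (xc : ZMod p → X) (η : ℝ) :
    Set (Solenoid r) :=
  {z | ∃ i, LimAt xc z i ∧ ∀ k : ℕ, dist (z.1 (k : ℤ)) (xc (i + (k : ZMod p))) < η}

section meas
set_option linter.unusedSectionVars false
variable {X : Type*} [MetricSpace X] [CompactSpace X] [MeasurableSpace X] [BorelSpace X]
    {r : X → X} {p : ℕ} {xc : ZMod p → X}
    {α : ZMod p → ℂ} {m0 : X → ℂ} {β : ℝ → ℝ} {ρ : Measure X} [IsProbabilityMeasure ρ]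
    {lamC : Measure (Solenoid r)}

def eA (r : X → X) (A : Set X) (x : X) : ℝ :=
  (Nat.card (r ⁻¹' {x}) : ℝ)⁻¹ * ∑' y : r ⁻¹' {x}, A.indicator (fun _ => (1 : ℝ)) y.1

theorem eA_nonneg (A : Set X) (x : X) : 0 ≤ eA r A x := by
  unfold eA
  refine mul_nonneg (by positivity) (tsum_nonneg (fun y => ?_))
  exact Set.indicator_nonneg (fun _ _ => zero_le_one) _

theorem eA_compl (H : HypT r xc α m0 β) (A : Set X) (x : X) :
    eA r A x + eA r Aᶜ x = 1 := by
  unfold eA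
  have := (H.hfin x).to_subtype
  have hfi : Fintype (r ⁻¹' {x}) := Fintype.ofFinite _
  have hN : (0 : ℝ) < Nat.card (r ⁻¹' {x}) := by exact_mod_cast cardpos H x
  rw [← mul_add, tsum_fintype, tsum_fintype, ← Finset.sum_add_distrib]
  have : ∀ y : r ⁻¹' {x}, A.indicator (fun _ => (1 : ℝ)) y.1 +
      Aᶜ.indicator (fun _ => (1 : ℝ)) y.1 = 1 := by
    intro y
    exact congrFun (Set.indicator_self_add_compl A (fun _ => (1 : ℝ))) y.1
  simp only [this, Finset.sum_const, nsmul_eq_mul, mul_one]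
  rw [Finset.card_univ, ← Nat.card_eq_fintype_card, inv_mul_cancel₀ hN.ne']

theorem eA_int (M : HypM r xc ρ lamC) {A : Set X} (hA : MeasurableSet A) :
    ∫ x, eA r A x ∂ρ = ρ.real A := by
  have := M.hsi (A.indicator (fun _ => 1)) (measurable_const.indicator hA) ⟨1, fun x => by
    by_cases h : x ∈ A <;> simp [h]⟩
  rw [integral_indicator hA] at this
  simp at this
  exact this.symm

theorem eA_aesm (H : HypT r xc α m0 β) (M : HypM r xc ρ lamC) {A : Set X}
    (hA : MeasurableSet A) : AEStronglyMeasurable (eA r A) ρ := by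
  by_contra hcon
  have h1 := eA_int M hA
  rw [integral_non_aestronglyMeasurable hcon] at h1
  have hcon2 : ¬ AEStronglyMeasurable (eA r Aᶜ) ρ := by
    intro h
    apply hcon
    have : eA r A = fun x => 1 - eA r Aᶜ x := by
      funext x; linarith [eA_compl H A x]
    rw [this]
    exact aestronglyMeasurable_const.sub h
  have h2 := eA_int M hA.compl
  rw [integral_non_aestronglyMeasurable hcon2] at h2
  have h3 := probReal_add_probReal_compl (μ := ρ) hA
  linarith

theorem eA_ne (H : HypT r xc α m0 β) (A : Set X) : {x | eA r A x ≠ 0} = r '' A := by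
  ext x
  have := (H.hfin x).to_subtype
  have hfi : Fintype (r ⁻¹' {x}) := Fintype.ofFinite _
  have hN : (0 : ℝ) < Nat.card (r ⁻¹' {x}) := by exact_mod_cast cardpos H x
  simp only [Set.mem_ofPred_eq, eA, Set.mem_image]
  rw [mul_ne_zero_iff_left (inv_ne_zero hN.ne'), tsum_fintype, ne_eq,
    Finset.sum_eq_zero_iff_of_nonneg
      (fun y _ => Set.indicator_nonneg (fun _ _ => zero_le_one) _)]
  simp
  constructor
  · rintro ⟨a, h1, h2⟩; exact ⟨a, h2, h1⟩
  · rintro ⟨a, h1, h2⟩; exact ⟨a, h2, h1⟩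

theorem nm_image0 (H : HypT r xc α m0 β) (M : HypM r xc ρ lamC) {A : Set X}
    (hA : MeasurableSet A) : NullMeasurableSet (r '' A) ρ := by
  rw [← eA_ne H]
  have h := (eA_aesm H M hA).aemeasurable.nullMeasurable (measurableSet_singleton (0 : ℝ)).compl
  exact h

theorem null_image (H : HypT r xc α m0 β) (M : HypM r xc ρ lamC) {Z : Set X}
    (hZ : ρ Z = 0) : ρ (r '' Z) = 0 := by
  obtain ⟨A, hZA, hA, hA0⟩ := exists_measurable_superset_of_null hZ
  refine measure_mono_null (Set.image_mono hZA) ?_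
  have h1 := eA_int M hA
  rw [Measure.real, hA0, ENNReal.toReal_zero] at h1
  have hi : Integrable (eA r A) ρ := by
    refine Integrable.of_bound (eA_aesm H M hA) 1 (ae_of_all _ (fun x => ?_))
    rw [Real.norm_eq_abs, abs_of_nonneg (eA_nonneg A x)]
    linarith [eA_compl H A x, eA_nonneg (r := r) Aᶜ x]
  rw [integral_eq_zero_iff_of_nonneg (fun x => eA_nonneg A x) hi] at h1
  rw [← eA_ne H]
  exact h1

theorem nm_image (H : HypT r xc α m0 β) (M : HypM r xc ρ lamC) {A : Set X}
    (hA : NullMeasurableSet A ρ) : NullMeasurableSet (r '' A) ρ := by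
  obtain ⟨t, htA, ht, hae⟩ := hA.exists_measurable_subset_ae_eq
  have h1 : r '' A = r '' t ∪ r '' (A \ t) := by
    rw [← Set.image_union, Set.union_sdiff_cancel htA]
  rw [h1]
  refine (nm_image0 H M ht).union (NullMeasurableSet.of_null (null_image H M ?_))
  exact (ae_le_set.1 hae.symm.le)

theorem nm_iter (H : HypT r xc α m0 β) (M : HypM r xc ρ lamC) (n : ℕ) {A : Set X}
    (hA : NullMeasurableSet A ρ) : NullMeasurableSet (r^[n] '' A) ρ := by
  induction n with
  | zero => simpa using hA
  | succ n ih =>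
    rw [Function.iterate_succ', Set.image_comp]
    exact nm_image H M ih

theorem null_preimage (H : HypT r xc α m0 β) (M : HypM r xc ρ lamC) {Z : Set X}
    (hZ : ρ Z = 0) : ρ (r ⁻¹' Z) = 0 := by
  obtain ⟨A, hZA, hA, hA0⟩ := exists_measurable_superset_of_null hZ
  refine measure_mono_null (Set.preimage_mono hZA) ?_
  have h1 := eA_int M (M.hr hA)
  have h2 : ∫ x, eA r (r ⁻¹' A) x ∂ρ = 0 := by
    refine integral_eq_zero_of_ae ?_
    have : ∀ᵐ x ∂ρ, x ∉ A := measure_eq_zero_iff_ae_notMem.1 hA0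
    filter_upwards [this] with x hx
    by_contra hcon
    have h3 : x ∈ {x | eA r (r ⁻¹' A) x ≠ 0} := hcon
    rw [eA_ne H] at h3
    obtain ⟨y, hy, rfl⟩ := h3
    exact hx hy
  rw [h2] at h1
  rw [Measure.real, eq_comm, ENNReal.toReal_eq_zero_iff] at h1
  exact h1.resolve_right (measure_ne_top _ _)

theorem meas_coord (k : ℤ) : Measurable (fun z : Solenoid r => z.1 k) :=
  (measurable_pi_apply k).comp measurable_subtype_coe

theorem meas_lim (i : ZMod p) : MeasurableSet {z : Solenoid r | LimAt xc z i} :=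
  measurableSet_tendsto _ (fun n : ℕ => meas_coord ((p : ℤ) * (n : ℤ)))

theorem meas_Y0 [NeZero p] (η : ℝ) : MeasurableSet (Y0 r xc η) := by
  have : Y0 r xc η = ⋃ i, ({z : Solenoid r | LimAt xc z i} ∩
      ⋂ k : ℕ, {z : Solenoid r | dist (z.1 (k : ℤ)) (xc (i + (k : ZMod p))) < η}) := by
    ext z; simp [Y0]
  rw [this]
  refine MeasurableSet.iUnion (fun i => (meas_lim i).inter (MeasurableSet.iInter (fun k => ?_)))
  exact measurableSet_lt ((meas_coord _).dist measurable_const) measurable_const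

theorem meas_shift : Measurable (shiftHat r) :=
  Measurable.subtype_mk (measurable_pi_lambda _ (fun n => meas_coord (n - 1)))

theorem meas_shiftInv : Measurable (shiftHatInv r) :=
  Measurable.subtype_mk (measurable_pi_lambda _ (fun n => meas_coord (n + 1)))

theorem sol_std (hr : Measurable r) : StandardBorelSpace (Solenoid r) := by
  have : MeasurableSet {z : ℤ → X | ∀ n : ℤ, r (z (n + 1)) = z n} := by
    rw [Set.ofPred_forall]
    refine MeasurableSet.iInter (fun n => ?_)
    exact measurableSet_eq_fun (hr.comp (measurable_pi_apply _)) (measurable_pi_apply _)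
  exact this.standardBorel

theorem shift_inv (z : Solenoid r) : shiftHat r (shiftHatInv r z) = z := by
  apply Subtype.ext; funext k; simp [shiftHat, shiftHatInv]

theorem inv_shift (z : Solenoid r) : shiftHatInv r (shiftHat r z) = z := by
  apply Subtype.ext; funext k; simp [shiftHat, shiftHatInv]

theorem shift_inv_iter (z : Solenoid r) (n : ℕ) :
    (shiftHat r)^[n] ((shiftHatInv r)^[n] z) = z :=
  (Function.LeftInverse.iterate shift_inv n) z

theorem inv_shift_iter (z : Solenoid r) (n : ℕ) :
    (shiftHatInv r)^[n] ((shiftHat r)^[n] z) = z :=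
  (Function.LeftInverse.iterate inv_shift n) z

theorem inj_Y0 {η : ℝ} (h1 : ∀ i, Set.InjOn r (Metric.ball (xc i) η))
    (h2 : ∀ i j x, dist x (xc i) < η → dist x (xc j) < η → i = j) :
    Set.InjOn (fun z : Solenoid r => z.1 0) (Y0 r xc η) := by
  rintro z ⟨i, -, hz⟩ w ⟨j, -, hw⟩ (heq : z.1 0 = w.1 0)
  have hij : i = j := by
    apply h2 i j (z.1 0)
    · simpa using hz 0
    · rw [heq]; simpa using hw 0
  subst hij
  have hnat : ∀ k : ℕ, z.1 (k : ℤ) = w.1 (k : ℤ) := by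
    intro k
    induction k with
    | zero => simpa using heq
    | succ k ih =>
      apply h1 (i + ((k + 1 : ℕ) : ZMod p)) (hz (k + 1)) (hw (k + 1))
      have e : ((k + 1 : ℕ) : ℤ) = (k : ℤ) + 1 := by push_cast; ring
      rw [e, z.2, w.2, ih]
  apply Subtype.ext; funext k
  have h3 : k + ((k.natAbs : ℕ) : ℤ) = ((k + k.natAbs).toNat : ℤ) := by omega
  rw [← iter_apply z k.natAbs k, ← iter_apply w k.natAbs k, h3, hnat]

theorem ev_Y0 (H : HypT r xc α m0 β) {z : Solenoid r} {i : ZMod p} (h : LimAt xc z i) {η : ℝ}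
    (hη : 0 < η) : ∀ᶠ n : ℕ in atTop, (shiftHatInv r)^[n] z ∈ Y0 r xc η := by
  have hc := conv_of_lim H h
  obtain ⟨n0, hn0⟩ := eventually_atTop.1 ((tendsto_order.1 hc).2 η hη)
  filter_upwards [eventually_ge_atTop n0] with n hn
  refine ⟨i + n, lim_of_conv H (conv_shiftInv_iter hc n), fun k => ?_⟩
  rw [shiftInv_iter]
  have := hn0 (k + n) (by omega)
  rw [show i + n + (k : ZMod p) = i + ((k + n : ℕ) : ZMod p) by push_cast; ring]
  exact_mod_cast this

theorem ae_NC [NeZero p] (H : HypT r xc α m0 β) (M : HypM r xc ρ lamC) {P : Solenoid r → Prop}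
    (h : ∀ᵐ z ∂lamC, P z) : ∀ᵐ x ∂ρ, ∀ ω ∈ NC r xc x, P ω := by
  obtain ⟨N, hPN, hN, hN0⟩ := exists_measurable_superset_of_null (ae_iff.1 h)
  obtain ⟨η, hη, hinj, hdis⟩ := exists_eta H
  have := sol_std (r := r) M.hr
  set A : Set X := (fun z : Solenoid r => z.1 0) '' (N ∩ {z | ∃ i, LimAt xc z i}) with hA
  have hAeq : A = ⋃ n : ℕ, r^[n] '' ((fun z : Solenoid r => z.1 0) ''
      (Y0 r xc η ∩ (shiftHat r)^[n] ⁻¹' (N ∩ {z | ∃ i, LimAt xc z i}))) := by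
    ext x
    simp only [hA, Set.mem_iUnion, ← Set.image_comp]
    constructor
    · rintro ⟨z, hz, rfl⟩
      obtain ⟨i, hi⟩ := hz.2
      obtain ⟨n, hn⟩ := (ev_Y0 H hi hη).exists
      refine ⟨n, (shiftHatInv r)^[n] z, ⟨hn, ?_⟩, ?_⟩
      · rw [Set.mem_preimage, shift_inv_iter]; exact hz
      · simp only [Function.comp, shiftInv_iter]
        exact iter_apply z n 0
    · rintro ⟨n, w, hw, rfl⟩
      refine ⟨(shiftHat r)^[n] w, hw.2, ?_⟩
      simp only [Function.comp, shift_iter]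
      rw [← iter_apply w n (0 - n)]
      simp
  have hlimm : MeasurableSet {z : Solenoid r | ∃ i, LimAt xc z i} := by
    rw [Set.ofPred_exists]
    exact MeasurableSet.iUnion (fun i => meas_lim i)
  have hAnm : NullMeasurableSet A ρ := by
    rw [hAeq]
    refine NullMeasurableSet.iUnion (fun n => nm_iter H M n ?_)
    refine MeasurableSet.nullMeasurableSet ?_
    refine MeasurableSet.image_of_measurable_injOn ?_ (meas_coord 0)
      ((inj_Y0 hinj hdis).mono Set.inter_subset_left)
    exact (meas_Y0 η).inter ((meas_shift.iterate n) (hN.inter hlimm))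
  have h1 := M.hlam (N.indicator 1) (measurable_one.indicator hN)
  rw [lintegral_indicator_one hN, hN0] at h1
  have h2 : ρ A ≤ 0 := by
    rw [h1, ← lintegral_indicator_one₀ hAnm]
    refine lintegral_mono (fun x => ?_)
    by_cases hx : x ∈ A
    · rw [Set.indicator_of_mem hx]
      obtain ⟨z, hz, rfl⟩ := hx
      refine le_trans ?_ (ENNReal.le_tsum (⟨z, rfl, hz.2⟩ : NC r xc (z.1 0)))
      simp [hz.1]
    · simp [hx]
  have h3 : ∀ᵐ x ∂ρ, x ∉ A := measure_eq_zero_iff_ae_notMem.1 (le_antisymm h2 bot_le)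
  filter_upwards [h3] with x hx ω hω
  by_contra hcon
  exact hx ⟨ω, ⟨hPN hcon, hω.2⟩, hω.1⟩

theorem ae_of_NC (M : HypM r xc ρ lamC) {P : Solenoid r → Prop}
    (hP : MeasurableSet {z | P z}) (h : ∀ᵐ x ∂ρ, ∀ ω ∈ NC r xc x, P ω) : ∀ᵐ z ∂lamC, P z := by
  rw [ae_iff]
  have hc : MeasurableSet {z | ¬ P z} := hP.compl
  rw [← lintegral_indicator_one hc, M.hlam _ (measurable_one.indicator hc),
    ← lintegral_zero (μ := ρ)]
  refine lintegral_congr_ae ?_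
  filter_upwards [h] with x hx
  rw [ENNReal.tsum_eq_zero]
  intro ω
  have := hx ω.1 ω.2
  simp [this]

theorem ae_lim [NeZero p] (M : HypM r xc ρ lamC) : ∀ᵐ z ∂lamC, ∃ i, LimAt xc z i := by
  refine ae_of_NC M ?_ (ae_of_all _ (fun x ω hω => hω.2))
  rw [Set.ofPred_exists]
  exact MeasurableSet.iUnion (fun i => meas_lim i)

theorem ae_shift [NeZero p] (H : HypT r xc α m0 β) (M : HypM r xc ρ lamC)
    {P : Solenoid r → Prop} (h : ∀ᵐ z ∂lamC, P z) : ∀ᵐ z ∂lamC, P (shiftHat r z) := by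
  obtain ⟨N, hPN, hN, hN0⟩ := exists_measurable_superset_of_null (ae_iff.1 h)
  have h0 : ∀ᵐ z ∂lamC, z ∉ N := measure_eq_zero_iff_ae_notMem.1 hN0
  have h1 := ae_NC H M h0
  have h2 : ∀ᵐ x ∂ρ, ∀ ω ∈ NC r xc (r x), ω ∉ N := by
    rw [ae_iff] at h1 ⊢
    exact null_preimage H M h1
  have h3 : ∀ᵐ z ∂lamC, shiftHat r z ∉ N := by
    refine ae_of_NC M (meas_shift hN.compl) ?_
    filter_upwards [h2] with x hx ω hω
    refine hx _ ⟨?_, ?_⟩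
    · have := ω.2 (-1)
      simp only [shiftHat, ← hω.1]
      simpa using this.symm
    · obtain ⟨i, hi⟩ := hω.2
      exact ⟨i - 1, lim_of_conv H (conv_shift (conv_of_lim H hi))⟩
  filter_upwards [h3] with z hz
  by_contra hcon
  exact hz (hPN hcon)

theorem ae_shiftInv [NeZero p] (H : HypT r xc α m0 β) (M : HypM r xc ρ lamC)
    {P : Solenoid r → Prop} (h : ∀ᵐ z ∂lamC, P z) : ∀ᵐ z ∂lamC, P (shiftHatInv r z) := by
  obtain ⟨N, hPN, hN, hN0⟩ := exists_measurable_superset_of_null (ae_iff.1 h)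
  have h0 : ∀ᵐ z ∂lamC, z ∉ N := measure_eq_zero_iff_ae_notMem.1 hN0
  have h1 := ae_NC H M h0
  have h2 : ∀ᵐ x ∂ρ, ∀ y, r y = x → ∀ ω ∈ NC r xc y, ω ∉ N := by
    rw [ae_iff] at h1 ⊢
    refine measure_mono_null ?_ (null_image H M h1)
    intro x hx
    simp only [Set.mem_ofPred_eq] at hx
    push Not at hx
    obtain ⟨y, hy, ω, hω, hN⟩ := hx
    exact ⟨y, fun hh => hh ω hω hN, hy⟩
  have h3 : ∀ᵐ z ∂lamC, shiftHatInv r z ∉ N := by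
    refine ae_of_NC M (meas_shiftInv hN.compl) ?_
    filter_upwards [h2] with x hx ω hω
    refine hx (ω.1 1) ?_ _ ⟨?_, ?_⟩
    · have := ω.2 0
      rw [← hω.1]
      simpa using this
    · simp [shiftHatInv]
    · obtain ⟨i, hi⟩ := hω.2
      exact ⟨i + 1, lim_of_conv H (conv_shiftInv (conv_of_lim H hi))⟩
  filter_upwards [h3] with z hz
  by_contra hcon
  exact hz (hPN hcon)

theorem ae_shiftInv_iter [NeZero p] (H : HypT r xc α m0 β) (M : HypM r xc ρ lamC)
    {P : Solenoid r → Prop} (h : ∀ᵐ z ∂lamC, P z) (n : ℕ) :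
    ∀ᵐ z ∂lamC, P ((shiftHatInv r)^[n] z) := by
  induction n with
  | zero => simpa using h
  | succ n ih =>
    have := ae_shiftInv H M ih
    simpa only [Function.iterate_succ_apply] using this

end meas

section lp
variable {Ω : Type*} [MeasurableSpace Ω] {μ : Measure Ω}

def ind (S : Set Ω) (hS : MeasurableSet S) (ξ : Lp ℂ 2 μ) : Lp ℂ 2 μ :=
  ((Lp.memLp ξ).indicator hS).toLp

theorem ind_coe (S : Set Ω) (hS : MeasurableSet S) (ξ : Lp ℂ 2 μ) :
    ⇑(ind S hS ξ) =ᵐ[μ] S.indicator ξ := MemLp.coeFn_toLp _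

theorem norm_ind_le (S : Set Ω) (hS : MeasurableSet S) (ξ : Lp ℂ 2 μ) :
    ‖ind S hS ξ‖ ≤ ‖ξ‖ := by
  refine Lp.norm_le_norm_of_ae_le ?_
  filter_upwards [ind_coe S hS ξ] with z hz
  rw [hz]
  exact norm_indicator_le_norm_self _ _

theorem normsq (ξ : Lp ℂ 2 μ) : ‖ξ‖ₑ ^ 2 = ∫⁻ z, ‖ξ z‖ₑ ^ 2 ∂μ := by
  rw [Lp.enorm_def]
  have := eLpNorm_nnreal_pow_eq_lintegral (f := ξ) (μ := μ) (p := 2) (by norm_num)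
  simp only [NNReal.coe_ofNat, ENNReal.coe_ofNat] at this
  exact_mod_cast this

theorem ind_tendsto (S : ℕ → Set Ω) (hS : ∀ n, MeasurableSet (S n)) (ξ : Lp ℂ 2 μ)
    (h : ∀ᵐ z ∂μ, ∀ᶠ n in atTop, z ∈ S n) :
    Tendsto (fun n => ind (S n) (hS n) ξ) atTop (𝓝 ξ) := by
  rw [tendsto_iff_edist_tendsto_0]
  have h1 : ∀ n, edist (ind (S n) (hS n) ξ) ξ ^ 2 =
      ∫⁻ z, (S n)ᶜ.indicator (fun z => ‖ξ z‖ₑ ^ 2) z ∂μ := by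
    intro n
    rw [edist_eq_enorm_sub, normsq]
    refine lintegral_congr_ae ?_
    filter_upwards [ind_coe (S n) (hS n) ξ, Lp.coeFn_sub (ind (S n) (hS n) ξ) ξ] with z h1 h2
    rw [h2, Pi.sub_apply, h1]
    by_cases hz : z ∈ S n
    · simp [hz]
    · simp [hz]
  have hm : Measurable (fun z => ‖ξ z‖ₑ ^ 2) :=
    ((Lp.stronglyMeasurable ξ).measurable.enorm).pow_const 2
  have h2 : Tendsto (fun n => ∫⁻ z, (S n)ᶜ.indicator (fun z => ‖ξ z‖ₑ ^ 2) z ∂μ) atTop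
      (𝓝 (∫⁻ _, 0 ∂μ)) := by
    refine tendsto_lintegral_of_dominated_convergence (fun z => ‖ξ z‖ₑ ^ 2)
      (fun n => hm.indicator (hS n).compl) (fun n => ae_of_all _ (fun z => ?_)) ?_ ?_
    · exact Set.indicator_le_self _ _ _
    · rw [← normsq]; exact ENNReal.pow_ne_top enorm_ne_top
    · filter_upwards [h] with z hz
      refine tendsto_const_nhds.congr' ?_
      filter_upwards [hz] with n hn
      simp [hn]
  simp only [← h1, lintegral_zero] at h2
  have h3 := (ENNReal.continuous_rpow_const (y := (1/2 : ℝ))).tendsto 0 |>.comp h2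
  simp only [Function.comp_def] at h3
  rw [ENNReal.zero_rpow_of_pos (by norm_num)] at h3
  refine h3.congr (fun n => ?_)
  rw [← ENNReal.rpow_natCast, ← ENNReal.rpow_mul]
  norm_num

theorem inner_ind (S : Set Ω) (hS : MeasurableSet S) (ψ h : Lp ℂ 2 μ) :
    inner ℂ (ind S hS ψ) (h - ind S hS h) = 0 := by
  rw [L2.inner_def]
  refine integral_eq_zero_of_ae ?_
  filter_upwards [ind_coe S hS ψ, ind_coe S hS h, Lp.coeFn_sub h (ind S hS h)] with z h1 h2 h3
  rw [h1, h3, Pi.sub_apply, h2]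
  by_cases hz : z ∈ S <;> simp [hz]

theorem core_abs (S : Set Ω) (hS : MeasurableSet S) (ψ h : Lp ℂ 2 μ) (ε : ℝ)
    (h1 : ‖h‖ ≤ ‖ind S hS ψ‖) (h2 : ‖ind S hS ψ - ind S hS h‖ ≤ ε * ‖ind S hS ψ‖) :
    ‖ind S hS ψ - h‖ ^ 2 ≤ 2 * ε * ‖ind S hS ψ‖ ^ 2 := by
  set a := ind S hS ψ with ha
  rw [norm_sub_sq (𝕜 := ℂ)]
  have h3 : inner ℂ a h = inner ℂ a a - inner ℂ a (a - ind S hS h) := by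
    have := inner_ind S hS ψ h
    rw [← ha, inner_sub_right, sub_eq_zero] at this
    rw [this, inner_sub_right]; ring
  have h4 : RCLike.re (inner ℂ a h) = ‖a‖ ^ 2 - RCLike.re (inner ℂ a (a - ind S hS h)) := by
    rw [h3, map_sub, inner_self_eq_norm_sq]
  have h5 : RCLike.re (inner ℂ a (a - ind S hS h)) ≤ ‖a‖ * (ε * ‖a‖) :=
    (re_inner_le_norm _ _).trans (mul_le_mul_of_nonneg_left h2 (norm_nonneg _))
  have h6 : ‖h‖ ^ 2 ≤ ‖a‖ ^ 2 := by gcongr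
  rw [h4]
  nlinarith

theorem ind_ind (S T : Set Ω) (hS : MeasurableSet S) (hT : MeasurableSet T) (ξ : Lp ℂ 2 μ) :
    ind T hT (ind S hS ξ) = ind (S ∩ T) (hS.inter hT) ξ := by
  refine Lp.ext ?_
  filter_upwards [ind_coe S hS ξ, ind_coe T hT (ind S hS ξ),
    ind_coe (S ∩ T) (hS.inter hT) ξ] with z h1 h2 h3
  rw [h2, h3]
  by_cases hs : z ∈ S <;> by_cases ht : z ∈ T <;> simp [hs, ht, h1]

theorem ind_congr {S T : Set Ω} (h : S = T) (hS : MeasurableSet S) (hT : MeasurableSet T)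
    (ξ : Lp ℂ 2 μ) : ind S hS ξ = ind T hT ξ := by
  subst h; rfl
end lp

section main
set_option linter.unusedSectionVars false
variable {X : Type*} [MetricSpace X] [CompactSpace X] [MeasurableSpace X] [BorelSpace X]
    {r : X → X} {p : ℕ} {xc : ZMod p → X}
    {α : ZMod p → ℂ} {m0 : X → ℂ} {β : ℝ → ℝ} {ρ : Measure X} [IsProbabilityMeasure ρ]
    {lamC : Measure (Solenoid r)} {ι : Solenoid r → ZMod p}

theorem scal_eq (z : Solenoid r) : scalingFn r α ι m0 z = ∏' k, fac r α m0 z (ι z) k := rfl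

theorem conv_iota (H : HypT r xc α m0 β)
    (hι : ∀ x : X, ∀ ω ∈ NC r xc x,
      Tendsto (fun n : ℕ => ω.1 ((p : ℤ) * (n : ℤ))) atTop (𝓝 (xc (ι ω))))
    {z : Solenoid r} (h : ∃ i, LimAt xc z i) : Conv xc z (ι z) :=
  conv_of_lim H (hι (z.1 0) z ⟨rfl, h⟩)

theorem conv_ex (H : HypT r xc α m0 β) {z : Solenoid r} {i : ZMod p} (h : Conv xc z i) :
    ∃ i, LimAt xc z i := ⟨i, lim_of_conv H h⟩

theorem scal_shift [NeZero p] (H : HypT r xc α m0 β)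
    (hι : ∀ x : X, ∀ ω ∈ NC r xc x,
      Tendsto (fun n : ℕ => ω.1 ((p : ℤ) * (n : ℤ))) atTop (𝓝 (xc (ι ω))))
    {z : Solenoid r} (h : ∃ i, LimAt xc z i) :
    α (ι z) * (Real.sqrt (Nat.card (r ⁻¹' {r (z.1 0)})) : ℂ) *
      scalingFn r α ι m0 (shiftHat r z) = m0 (z.1 0) * scalingFn r α ι m0 z := by
  have hc := conv_iota H hι h
  have hc2 := conv_shift hc
  have e : ι (shiftHat r z) = ι z - 1 := conv_unique H (conv_iota H hι (conv_ex H hc2)) hc2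
  rw [scal_eq, scal_eq, e, tprod_shift H hc]
  have hαne : α (ι z) ≠ 0 := by
    intro h0; have := H.hα (ι z); rw [h0] at this; simp at this
  have hN : (0 : ℝ) < Real.sqrt (Nat.card (r ⁻¹' {r (z.1 0)})) :=
    Real.sqrt_pos.2 (by exact_mod_cast cardpos H _)
  have hsne : (Real.sqrt (Nat.card (r ⁻¹' {r (z.1 0)})) : ℂ) ≠ 0 := by
    exact_mod_cast hN.ne'
  field_simp

theorem scal_tendsto [NeZero p] (H : HypT r xc α m0 β)
    (hι : ∀ x : X, ∀ ω ∈ NC r xc x,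
      Tendsto (fun n : ℕ => ω.1 ((p : ℤ) * (n : ℤ))) atTop (𝓝 (xc (ι ω))))
    {z : Solenoid r} (h : ∃ i, LimAt xc z i) :
    Tendsto (fun n => scalingFn r α ι m0 ((shiftHatInv r)^[n] z)) atTop (𝓝 1) := by
  have hc := conv_iota H hι h
  refine (tail_tendsto H hc).congr (fun n => ?_)
  have hc2 := conv_shiftInv_iter hc n
  have e : ι ((shiftHatInv r)^[n] z) = ι z + n :=
    conv_unique H (conv_iota H hι (conv_ex H hc2)) hc2
  rw [scal_eq, e]

theorem scal_sum [NeZero p] (H : HypT r xc α m0 β)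
    (hι : ∀ x : X, ∀ ω ∈ NC r xc x,
      Tendsto (fun n : ℕ => ω.1 ((p : ℤ) * (n : ℤ))) atTop (𝓝 (xc (ι ω)))) (x : X) :
    ∑' ω : NC r xc x, ‖scalingFn r α ι m0 ω.1‖ₑ ^ 2 ≤ 1 := by
  rw [ENNReal.tsum_eq_iSup_sum]
  refine iSup_le (fun T => ?_)
  have h1 := sum_tprod_le H x (T.map (Function.Embedding.subtype _)) ι (by
    intro z hz
    obtain ⟨w, -, rfl⟩ := Finset.mem_map.1 hz
    exact ⟨w.2.1, conv_iota H hι w.2.2⟩)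
  rw [Finset.sum_map] at h1
  have h2 : ∑ ω ∈ T, ‖scalingFn r α ι m0 ω.1‖ₑ ^ 2 =
      ENNReal.ofReal (∑ ω ∈ T, ‖scalingFn r α ι m0 ω.1‖ ^ 2) := by
    rw [ENNReal.ofReal_sum_of_nonneg (fun _ _ => by positivity)]
    refine Finset.sum_congr rfl (fun ω _ => ?_)
    rw [ENNReal.ofReal_pow (norm_nonneg _), ofReal_norm]
  rw [h2]
  exact ENNReal.ofReal_le_one.2 h1

theorem core [NeZero p] (H : HypT r xc α m0 β) (M : HypM r xc ρ lamC)
    (hι : ∀ x : X, ∀ ω ∈ NC r xc x,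
      Tendsto (fun n : ℕ => ω.1 ((p : ℤ) * (n : ℤ))) atTop (𝓝 (xc (ι ω))))
    (π : (X → ℂ) → (Lp ℂ 2 lamC →L[ℂ] Lp ℂ 2 lamC))
    (hπ : ∀ f : X → ℂ, Measurable f → (∃ M : ℝ, ∀ x, ‖f x‖ ≤ M) →
      ∀ ξ : Lp ℂ 2 lamC, ⇑(π f ξ) =ᵐ[lamC] fun z => f (z.1 0) * ξ z)
    (φ : Lp ℂ 2 lamC) (hφ : ⇑φ =ᵐ[lamC] scalingFn r α ι m0)
    {η : ℝ} (hinj : Set.InjOn (fun z : Solenoid r => z.1 0) (Y0 r xc η))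
    (B : Set (Solenoid r)) (hB : MeasurableSet B) (hBY : B ⊆ Y0 r xc η)
    (ε : ℝ) (ψ : Lp ℂ 2 lamC)
    (h1 : ∀ z ∈ B, ‖φ z - 1‖ ≤ ε) (K : ℝ) (h2 : ∀ z ∈ B, ‖ψ z‖ ≤ K) :
    ∃ f : X → ℂ, Measurable f ∧ (∃ M : ℝ, ∀ x, ‖f x‖ ≤ M) ∧
      ‖ind B hB ψ - π f φ‖ ^ 2 ≤ 2 * ε * ‖ind B hB ψ‖ ^ 2 := by
  have := sol_std (r := r) M.hr
  have : StandardBorelSpace B := hB.standardBorel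
  set c : B → X := fun b => b.1.1 0 with hc
  have hcinj : Function.Injective c := fun a b hab =>
    Subtype.ext (hinj (hBY a.2) (hBY b.2) hab)
  have hce : MeasurableEmbedding c :=
    Measurable.measurableEmbedding ((meas_coord 0).comp measurable_subtype_coe) hcinj
  have hψm : Measurable ψ := (Lp.stronglyMeasurable ψ).measurable
  have hφm : Measurable φ := (Lp.stronglyMeasurable φ).measurable
  set g : X → ℂ := Function.extend c (fun b => ψ b.1) 0 with hg
  have hgm : Measurable g := hce.measurable_extend (hψm.comp measurable_subtype_coe)
    measurable_zero
  have hgB : ∀ z ∈ B, g (z.1 0) = ψ z := fun z hz =>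
    hcinj.extend_apply (fun b : B => ψ b.1) 0 ⟨z, hz⟩
  have hg0 : ∀ x, (¬ ∃ b, c b = x) → g x = 0 := fun x hx => by
    rw [hg, Function.extend_apply' _ _ _ hx]; rfl
  have hgb : ∃ M : ℝ, ∀ x, ‖g x‖ ≤ M := by
    refine ⟨max K 0, fun x => ?_⟩
    by_cases hx : ∃ b, c b = x
    · obtain ⟨b, rfl⟩ := hx
      rw [hc, hgB b.1 b.2]
      exact (h2 b.1 b.2).trans (le_max_left _ _)
    · rw [hg0 x hx, norm_zero]; exact le_max_right _ _
  refine ⟨g, hgm, hgb, core_abs B hB ψ (π g φ) ε ?_ ?_⟩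
  · have hsq : ‖π g φ‖ₑ ^ 2 ≤ ‖ind B hB ψ‖ₑ ^ 2 := by
      rw [normsq, normsq]
      have e1 : ∫⁻ z, ‖(π g φ) z‖ₑ ^ 2 ∂lamC = ∫⁻ z, ‖g (z.1 0)‖ₑ ^ 2 * ‖φ z‖ₑ ^ 2 ∂lamC := by
        refine lintegral_congr_ae ?_
        filter_upwards [hπ g hgm hgb φ] with z hz
        rw [hz, enorm_mul, mul_pow]
      have e2 : ∫⁻ z, ‖(ind B hB ψ) z‖ₑ ^ 2 ∂lamC = ∫⁻ z, ‖B.indicator ψ z‖ₑ ^ 2 ∂lamC := by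
        refine lintegral_congr_ae ?_
        filter_upwards [ind_coe B hB ψ] with z hz
        rw [hz]
      rw [e1, e2, M.hlam (fun z => ‖g (z.1 0)‖ₑ ^ 2 * ‖φ z‖ₑ ^ 2)
        (((hgm.comp (meas_coord 0)).enorm.pow_const 2).mul
        (hφm.enorm.pow_const 2)), M.hlam (fun z => ‖B.indicator ψ z‖ₑ ^ 2)
          ((hψm.indicator hB).enorm.pow_const 2)]
      refine lintegral_mono_ae ?_
      filter_upwards [ae_NC H M hφ] with x hx
      have e3 : ∑' ω : NC r xc x, ‖g (ω.1.1 0)‖ₑ ^ 2 * ‖φ ω.1‖ₑ ^ 2 =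
          ‖g x‖ₑ ^ 2 * ∑' ω : NC r xc x, ‖scalingFn r α ι m0 ω.1‖ₑ ^ 2 := by
        rw [← ENNReal.tsum_mul_left]
        refine tsum_congr (fun ω => ?_)
        rw [ω.2.1, hx ω.1 ω.2]
      rw [e3]
      refine (mul_le_of_le_one_right bot_le (scal_sum H hι x)).trans ?_
      by_cases hx : ∃ b, c b = x
      · obtain ⟨b, rfl⟩ := hx
        obtain ⟨i, hi, -⟩ := hBY b.2
        refine le_trans (le_of_eq ?_) (ENNReal.le_tsum (⟨b.1, rfl, i, hi⟩ : NC r xc (c b)))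
        rw [Set.indicator_of_mem b.2, hc, hgB b.1 b.2]
      · rw [hg0 x hx]; simp
    have := (ENNReal.pow_le_pow_left_iff (two_ne_zero)).1 hsq
    rw [← toReal_enorm, ← toReal_enorm]
    exact ENNReal.toReal_mono enorm_ne_top this
  · refine Lp.norm_le_mul_norm_of_ae_le_mul ?_
    filter_upwards [ind_coe B hB ψ, ind_coe B hB (π g φ), hπ g hgm hgb φ,
      Lp.coeFn_sub (ind B hB ψ) (ind B hB (π g φ))] with z a1 a2 a3 a4
    rw [a4, Pi.sub_apply, a1, a2]
    by_cases hz : z ∈ B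
    · rw [Set.indicator_of_mem hz, Set.indicator_of_mem hz, a3, hgB z hz]
      have : ψ z - ψ z * φ z = - ((φ z - 1) * ψ z) := by ring
      rw [this, norm_neg, norm_mul]
      exact mul_le_mul_of_nonneg_right (h1 z hz) (norm_nonneg _)
    · simp [hz]

theorem U_ind [NeZero p] (H : HypT r xc α m0 β) (M : HypM r xc ρ lamC)
    (U : Lp ℂ 2 lamC ≃ₗᵢ[ℂ] Lp ℂ 2 lamC)
    (hU : ∀ ξ : Lp ℂ 2 lamC, ⇑(U ξ) =ᵐ[lamC]
      fun z => α (ι z) * (Real.sqrt (Nat.card (r ⁻¹' {r (z.1 0)})) : ℂ) * ξ (shiftHat r z))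
    (S : Set (Solenoid r)) (hS : MeasurableSet S) (ξ : Lp ℂ 2 lamC) :
    U (ind S hS ξ) = ind (shiftHat r ⁻¹' S) (meas_shift hS) (U ξ) := by
  refine Lp.ext ?_
  filter_upwards [hU (ind S hS ξ), hU ξ, ind_coe (shiftHat r ⁻¹' S) (meas_shift hS) (U ξ),
    ae_shift H M (ind_coe S hS ξ)] with z h1 h2 h3 h4
  rw [h1, h3, h4]
  by_cases hz : shiftHat r z ∈ S
  · rw [Set.indicator_of_mem hz, Set.indicator_of_mem (show z ∈ shiftHat r ⁻¹' S from hz), h2]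
  · rw [Set.indicator_of_notMem hz,
      Set.indicator_of_notMem (show z ∉ shiftHat r ⁻¹' S from hz), mul_zero]

theorem U_ind_iter [NeZero p] (H : HypT r xc α m0 β) (M : HypM r xc ρ lamC)
    (U : Lp ℂ 2 lamC ≃ₗᵢ[ℂ] Lp ℂ 2 lamC)
    (hU : ∀ ξ : Lp ℂ 2 lamC, ⇑(U ξ) =ᵐ[lamC]
      fun z => α (ι z) * (Real.sqrt (Nat.card (r ⁻¹' {r (z.1 0)})) : ℂ) * ξ (shiftHat r z))
    (n : ℕ) (S : Set (Solenoid r)) (hS : MeasurableSet S) (ξ : Lp ℂ 2 lamC) :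
    (U ^ n) (ind S hS ξ) =
      ind ((shiftHat r)^[n] ⁻¹' S) (meas_shift.iterate n hS) ((U ^ n) ξ) := by
  induction n generalizing S with
  | zero => rfl
  | succ n ih =>
    rw [pow_succ']
    show U ((U ^ n) _) = _
    rw [ih, U_ind H M U hU]
    congr 1

theorem U_phi [NeZero p] (H : HypT r xc α m0 β) (M : HypM r xc ρ lamC)
    (hι : ∀ x : X, ∀ ω ∈ NC r xc x,
      Tendsto (fun n : ℕ => ω.1 ((p : ℤ) * (n : ℤ))) atTop (𝓝 (xc (ι ω))))
    (hm0m : Measurable m0) (hm0b : ∃ M : ℝ, ∀ x, ‖m0 x‖ ≤ M)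
    (U : Lp ℂ 2 lamC ≃ₗᵢ[ℂ] Lp ℂ 2 lamC)
    (hU : ∀ ξ : Lp ℂ 2 lamC, ⇑(U ξ) =ᵐ[lamC]
      fun z => α (ι z) * (Real.sqrt (Nat.card (r ⁻¹' {r (z.1 0)})) : ℂ) * ξ (shiftHat r z))
    (π : (X → ℂ) → (Lp ℂ 2 lamC →L[ℂ] Lp ℂ 2 lamC))
    (hπ : ∀ f : X → ℂ, Measurable f → (∃ M : ℝ, ∀ x, ‖f x‖ ≤ M) →
      ∀ ξ : Lp ℂ 2 lamC, ⇑(π f ξ) =ᵐ[lamC] fun z => f (z.1 0) * ξ z)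
    (φ : Lp ℂ 2 lamC) (hφ : ⇑φ =ᵐ[lamC] scalingFn r α ι m0)
    (f : X → ℂ) (hf : Measurable f) (hfb : ∃ M : ℝ, ∀ x, ‖f x‖ ≤ M) :
    ∃ f' : X → ℂ, Measurable f' ∧ (∃ M : ℝ, ∀ x, ‖f' x‖ ≤ M) ∧ U (π f φ) = π f' φ := by
  have hm : Measurable (fun x => f (r x) * m0 x) := (hf.comp M.hr).mul hm0m
  have hb : ∃ M : ℝ, ∀ x, ‖f (r x) * m0 x‖ ≤ M := by
    obtain ⟨a, ha⟩ := hfb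
    obtain ⟨b, hb⟩ := hm0b
    refine ⟨a * b, fun x => ?_⟩
    rw [norm_mul]
    exact mul_le_mul (ha _) (hb _) (norm_nonneg _) ((norm_nonneg _).trans (ha x))
  refine ⟨fun x => f (r x) * m0 x, hm, hb, ?_⟩
  refine Lp.ext ?_
  filter_upwards [hU (π f φ), hπ _ hm hb φ, ae_shift H M (hπ f hf hfb φ), ae_shift H M hφ, hφ,
    ae_lim M] with z h1 h2 h3 h4 h5 h6
  rw [h1, h2, h3, h4, h5]
  have h7 := scal_shift H hι h6
  have h8 : (shiftHat r z).1 0 = r (z.1 0) := by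
    have := z.2 (-1)
    simp only [shiftHat]
    simpa using this.symm
  rw [h8]
  linear_combination (f (r (z.1 0))) * h7

end main

theorem statement11
    {X : Type*} [MetricSpace X] [CompactSpace X] [MeasurableSpace X] [BorelSpace X]
    (r : X → X) (hr : Measurable r)
    (hfin : ∀ x : X, (r ⁻¹' {x}).Finite) (hne : ∀ x : X, (r ⁻¹' {x}).Nonempty)
    (ρ : Measure X) [IsProbabilityMeasure ρ]
    (hsi : ∀ f : X → ℝ, Measurable f → (∃ M : ℝ, ∀ x, |f x| ≤ M) →
      ∫ x, f x ∂ρ = ∫ x, (Nat.card (r ⁻¹' {x}) : ℝ)⁻¹ * ∑' y : r ⁻¹' {x}, f y.1 ∂ρ)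
    {p : ℕ} (hp : 0 < p) (xc : ZMod p → X) (hxc : Function.Injective xc)
    (hcyc : ∀ i : ZMod p, r (xc (i + 1)) = xc i)
    (lamC : Measure (Solenoid r))
    (hlam : ∀ F : Solenoid r → ℝ≥0∞, Measurable F →
      ∫⁻ z, F z ∂lamC = ∫⁻ x, ∑' ω : NC r xc x, F ω.1 ∂ρ)
    (α : ZMod p → ℂ) (hα : ∀ i, ‖α i‖ = 1)
    (ι : Solenoid r → ZMod p)
    (hι : ∀ x : X, ∀ ω ∈ NC r xc x,
      Tendsto (fun n : ℕ => ω.1 ((p : ℤ) * (n : ℤ))) atTop (𝓝 (xc (ι ω))))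
    (hrep : ∀ i : ZMod p, ∃ c δ : ℝ, 0 < c ∧ c < 1 ∧ 0 < δ ∧ ∀ x : X,
      0 < dist x (xc i) → dist x (xc i) < δ → c⁻¹ * dist x (xc i) < dist (r^[p] x) (xc i))
    (hrc : ∀ i : ZMod p, ContinuousAt r (xc i))
    (hcc : ∀ i : ZMod p, ∀ᶠ y in 𝓝 (xc i), Nat.card (r ⁻¹' {y}) = Nat.card (r ⁻¹' {xc i}))
    (m0 : X → ℂ) (hm0m : Measurable m0) (hm0b : ∃ M : ℝ, ∀ x, ‖m0 x‖ ≤ M)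
    (β : ℝ → ℝ) (hβmono : MonotoneOn β (Set.Ici 0)) (hβ0 : ∀ t : ℝ, 0 ≤ t → 0 ≤ β t)
    (hβsum : ∀ A : ℝ, 0 < A → ∀ c : ℝ, 0 < c → c < 1 →
      Summable fun k : ℕ => β (A * c ^ (k + 1)))
    (hβlip : ∀ i : ZMod p, ∀ᶠ y in 𝓝 (xc i), ‖m0 y - m0 (xc i)‖ ≤ β (dist y (xc i)))
    (hqmf : ∀ x : X,
      (Nat.card (r ⁻¹' {x}) : ℝ)⁻¹ * ∑' y : r ⁻¹' {x}, ‖m0 y.1‖ ^ 2 = 1)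
    (hlp : ∀ i : ZMod p, m0 (xc i) = α i * (Real.sqrt (Nat.card (r ⁻¹' {r (xc i)})) : ℂ))
    (U : Lp ℂ 2 lamC ≃ₗᵢ[ℂ] Lp ℂ 2 lamC)
    (hU : ∀ ξ : Lp ℂ 2 lamC, ⇑(U ξ) =ᵐ[lamC]
      fun z => α (ι z) * (Real.sqrt (Nat.card (r ⁻¹' {r (z.1 0)})) : ℂ) * ξ (shiftHat r z))
    (π : (X → ℂ) → (Lp ℂ 2 lamC →L[ℂ] Lp ℂ 2 lamC))
    (hπ : ∀ f : X → ℂ, Measurable f → (∃ M : ℝ, ∀ x, ‖f x‖ ≤ M) →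
      ∀ ξ : Lp ℂ 2 lamC, ⇑(π f ξ) =ᵐ[lamC] fun z => f (z.1 0) * ξ z)
    (Upow : ℤ → (Lp ℂ 2 lamC ≃ₗᵢ[ℂ] Lp ℂ 2 lamC))
    (hUpow0 : Upow 0 = LinearIsometryEquiv.refl ℂ (Lp ℂ 2 lamC))
    (hUpowS : ∀ (k : ℤ) (ξ : Lp ℂ 2 lamC), Upow (k + 1) ξ = U (Upow k ξ))
    (φ : Lp ℂ 2 lamC) (hφ : ⇑φ =ᵐ[lamC] scalingFn r α ι m0)
    :
    ∀ V0 : Set (Lp ℂ 2 lamC),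
      V0 = closure {ξ : Lp ℂ 2 lamC |
        ∃ f : X → ℂ, Measurable f ∧ (∃ M : ℝ, ∀ x, ‖f x‖ ≤ M) ∧ ξ = π f φ} →
      (∀ n : ℤ, (fun ξ => Upow (-n) ξ) '' V0 ⊆ (fun ξ => Upow (-(n + 1)) ξ) '' V0) ∧
      closure (⋃ n : ℤ, (fun ξ => Upow (-n) ξ) '' V0) = Set.univ := by
  have : NeZero p := ⟨hp.ne'⟩
  have H : HypT r xc α m0 β := ⟨hfin, hne, hp, hxc, hcyc, hα, hrep, hrc, hcc, hβmono, hβ0,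
    hβsum, hβlip, hqmf, hlp⟩
  have M : HypM r xc ρ lamC := ⟨hr, hsi, hlam⟩
  have hUp : ∀ k : ℤ, Upow k = U ^ k := by
    intro k
    induction k using Int.induction_on with
    | zero => rw [hUpow0, zpow_zero]; rfl
    | succ k ih =>
      ext1 ξ
      rw [hUpowS, ih, add_comm, zpow_one_add]; rfl
    | pred k ih =>
      have h1 : U ^ (-(k : ℤ)) = U * Upow (-(k : ℤ) - 1) := by
        rw [← ih]
        ext1 ξ
        have := hUpowS (-(k : ℤ) - 1) ξ
        rw [sub_add_cancel] at this
        exact this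
      rw [zpow_sub_one, ← zpow_one U]
      have h2 := congrArg (fun T => U⁻¹ * T) h1
      simp only [inv_mul_cancel_left] at h2
      rw [← h2, zpow_one, ← zpow_neg_one, ← zpow_add, ← zpow_add, add_comm]
  intro V0 hV0
  constructor
  · rintro n _ ⟨ξ, hξ, rfl⟩
    refine ⟨U ξ, ?_, ?_⟩
    · rw [hV0] at hξ ⊢
      have h1 : U ξ ∈ U '' closure {ξ : Lp ℂ 2 lamC |
        ∃ f : X → ℂ, Measurable f ∧ (∃ M : ℝ, ∀ x, ‖f x‖ ≤ M) ∧ ξ = π f φ} := ⟨ξ, hξ, rfl⟩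
      have h2 := image_closure_subset_closure_image U.continuous h1
      refine closure_mono ?_ h2
      rintro _ ⟨ζ, ⟨f, hf, hfb, rfl⟩, rfl⟩
      exact U_phi H M hι hm0m hm0b U hU π hπ φ hφ f hf hfb
    · show Upow (-(n + 1)) (U ξ) = Upow (-n) ξ
      rw [hUp, hUp]
      have : U ^ (-n) = U ^ (-(n + 1)) * U := by
        rw [← zpow_add_one]; congr 1; ring
      rw [this]; rfl
  · rw [Set.eq_univ_iff_forall]
    intro ξ
    rw [Metric.mem_closure_iff]
    intro e he
    obtain ⟨η, hη, hinj, hdis⟩ := exists_eta H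
    have hinjY := inj_Y0 hinj hdis
    set ε : ℝ := (e / 3) ^ 2 / (2 * (‖ξ‖ ^ 2 + 1)) with hε
    have hε0 : 0 < ε := by positivity
    have hφm : Measurable φ := (Lp.stronglyMeasurable φ).measurable
    set B : Set (Solenoid r) := Y0 r xc η ∩ {z | ‖φ z - 1‖ ≤ ε} with hBdef
    have hB : MeasurableSet B :=
      (meas_Y0 η).inter (measurableSet_le (hφm.sub_const 1).norm measurable_const)
    have hSm : ∀ n : ℕ, MeasurableSet ((shiftHatInv r)^[n] ⁻¹' B) :=
      fun n => meas_shiftInv.iterate n hB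
    have hSae : ∀ᵐ z ∂lamC, ∀ᶠ n in atTop, z ∈ (fun n => (shiftHatInv r)^[n] ⁻¹' B) n := by
      have h1 : ∀ᵐ z ∂lamC, ∀ n : ℕ, φ ((shiftHatInv r)^[n] z) =
          scalingFn r α ι m0 ((shiftHatInv r)^[n] z) :=
        ae_all_iff.2 (fun n => ae_shiftInv_iter H M hφ n)
      filter_upwards [h1, ae_lim M] with z hz1 hz2
      have h3 := scal_tendsto H hι hz2
      obtain ⟨i, hi⟩ := hz2
      have h4 := Metric.tendsto_nhds.1 h3 ε hε0
      filter_upwards [ev_Y0 H hi hη, h4] with n hn1 hn2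
      refine ⟨hn1, ?_⟩
      show ‖φ ((shiftHatInv r)^[n] z) - 1‖ ≤ ε
      rw [hz1 n, ← dist_eq_norm]
      exact hn2.le
    have hlim1 := ind_tendsto _ hSm ξ hSae
    obtain ⟨n, hn⟩ := (Metric.tendsto_nhds.1 hlim1 (e / 3) (by positivity)).exists
    set ψ : Lp ℂ 2 lamC := (U ^ n) ξ with hψ
    have hψm : Measurable ψ := (Lp.stronglyMeasurable ψ).measurable
    have hUn : (U ^ n) (ind _ (hSm n) ξ) = ind B hB ψ := by
      rw [U_ind_iter H M U hU n]
      refine ind_congr ?_ _ _ _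
      ext z
      simp only [Set.mem_preimage, inv_shift_iter]
    have hTm : ∀ K : ℕ, MeasurableSet {z | ‖ψ z‖ ≤ (K : ℝ)} :=
      fun K => measurableSet_le hψm.norm measurable_const
    have hlim2 := ind_tendsto (fun K : ℕ => {z | ‖ψ z‖ ≤ (K : ℝ)}) hTm (ind B hB ψ)
      (ae_of_all _ (fun z => by
        obtain ⟨K0, hK0⟩ := exists_nat_ge ‖ψ z‖
        filter_upwards [eventually_ge_atTop K0] with K hK
        exact hK0.trans (by exact_mod_cast hK)))
    obtain ⟨K, hK⟩ := (Metric.tendsto_nhds.1 hlim2 (e / 3) (by positivity)).exists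
    rw [ind_ind] at hK
    obtain ⟨f, hf, hfb, hfe⟩ := core H M hι π hπ φ hφ hinjY (B ∩ {z | ‖ψ z‖ ≤ (K : ℝ)})
      (hB.inter (hTm K)) (fun z hz => hz.1.1) ε ψ (fun z hz => hz.1.2) K (fun z hz => hz.2)
    set ζ := ind (B ∩ {z | ‖ψ z‖ ≤ (K : ℝ)}) (hB.inter (hTm K)) ψ with hζ
    have hζn : ‖ζ‖ ≤ ‖ξ‖ := by
      refine (norm_ind_le _ _ _).trans (le_of_eq ?_)
      rw [hψ]; exact (U ^ n).norm_map ξ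
    have hlt : ‖ζ - π f φ‖ < e / 3 := by
      refine lt_of_pow_lt_pow_left₀ 2 (by positivity) (hfe.trans_lt ?_)
      have h1 : ‖ζ‖ ^ 2 ≤ ‖ξ‖ ^ 2 := by gcongr
      have h2 : 2 * ε * (‖ξ‖ ^ 2 + 1) = (e / 3) ^ 2 := by
        rw [hε]; field_simp
      nlinarith
    refine ⟨Upow (-(n : ℤ)) (π f φ), ?_, ?_⟩
    · refine Set.mem_iUnion.2 ⟨(n : ℤ), π f φ, ?_, rfl⟩
      rw [hV0]
      exact subset_closure ⟨f, hf, hfb, rfl⟩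
    · have h1 : (U ^ n) (Upow (-(n : ℤ)) (π f φ)) = π f φ := by
        rw [hUp, zpow_neg, zpow_natCast]
        show ((U ^ n) * (U ^ n)⁻¹) (π f φ) = π f φ
        rw [mul_inv_cancel]; rfl
      have h2 : dist (ind _ (hSm n) ξ) (Upow (-(n : ℤ)) (π f φ)) =
          dist (ind B hB ψ) (π f φ) := by
        rw [← hUn, ← (U ^ n).dist_map, h1]
      have h3 := dist_triangle ξ (ind _ (hSm n) ξ) (Upow (-(n : ℤ)) (π f φ))
      have h4 := dist_triangle (ind B hB ψ) ζ (π f φ)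
      rw [dist_comm] at hn hK
      rw [← dist_eq_norm] at hlt
      linarith
end
end
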